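/- For every A > 0 there exists C > 0 such that for all integers n ≥ m ≥ 1 satisfying √(n·log n) ≤ A·m, writing u = n/m, one has | p_{n,m} / ( ρ(u)·exp(u·ξ(u)/(2m)) ) − 1 | ≤ C·log(u+1)/m. -/

import Mathlib

open Real

noncomputable section

/-- Predicate characterizing the Dickman function `ρ : [0,∞) → (0,∞)`:
continuous on `[0,∞)`, positive, equal to `1` on `[0,1]`, and satisfying the
delay differential equation `t·ρ'(t) + ρ(t-1) = 0` for `t > 1`. -/
def IsDickman (ρ : ℝ → ℝ) : Prop :=
  ContinuousOn ρ (Set.Ici 0) ∧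
  (∀ t : ℝ, 0 ≤ t → 0 < ρ t) ∧
  (∀ t ∈ Set.Icc (0:ℝ) 1, ρ t = 1) ∧
  (∀ t : ℝ, 1 < t → HasDerivAt ρ (-(ρ (t - 1)) / t) t)

/-- `ξ(u)`: for `u > 1`, the unique positive solution of `e^ξ = 1 + u·ξ`; otherwise `0`. -/
def xi (u : ℝ) : ℝ :=
  open Classical in
  if h : ∃ x : ℝ, 0 < x ∧ Real.exp x = 1 + u * x then h.choose else 0

/-- `p_{n,m}`: probability that a uniformly random permutation of `{1,…,n}` is `m`-friable,
i.e. has no cycle of length greater than `m`. -/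
def permProb (n m : ℕ) : ℝ :=
  (Nat.card {σ : Equiv.Perm (Fin n) // ∀ c ∈ σ.cycleType, c ≤ m} : ℝ) /
    (Nat.factorial n : ℝ)

/-- `p_{n,m,q}`: proportion of monic polynomials of degree `n` over a finite field `F`
(of cardinality `q`) that are `m`-friable, i.e. all of whose monic irreducible factors
have degree at most `m`. -/
def polyProb (F : Type) [Field F] [Fintype F] (n m : ℕ) : ℝ :=
  (Nat.card {f : Polynomial F // f.Monic ∧ f.natDegree = n ∧
      ∀ p : Polynomial F, p.Monic → Irreducible p → p ∣ f → p.natDegree ≤ m} : ℝ) /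
    (Fintype.card F : ℝ) ^ n

/-- `F_q(z) = ∏_{deg P ≤ m} (1 - (z/q)^{deg P})⁻¹`, the product over monic irreducible
polynomials `P` over `F` of degree at most `m`. -/
def FqFun (F : Type) [Field F] [Fintype F] (m : ℕ) (z : ℝ) : ℝ :=
  ∏ᶠ p ∈ {p : Polynomial F | p.Monic ∧ Irreducible p ∧ p.natDegree ≤ m},
    (1 - (z / (Fintype.card F : ℝ)) ^ p.natDegree)⁻¹

/-- `G_q(z) = F_q(z) · exp(-∑_{i=1}^m z^i/i)`. -/
def Gq (F : Type) [Field F] [Fintype F] (m : ℕ) (z : ℝ) : ℝ :=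
  FqFun F m z * Real.exp (-(∑ i ∈ Finset.Icc 1 m, z ^ i / (i : ℝ)))

/-- The coefficients `d_{m,i}`. -/
def dcoef (m i : ℕ) : ℝ :=
  if i = m then -(1 / (m : ℝ)) * ∑ j ∈ Finset.Icc 2 m, (1 : ℝ) / (j : ℝ)
  else Real.Gamma ((i : ℝ) + (i : ℝ) / (m : ℝ)) /
    (((m : ℝ) - (i : ℝ)) * (Nat.factorial i : ℝ) * Real.Gamma (1 + (i : ℝ) / (m : ℝ)))

/-- `T(s) = ∫₀^s ((e^t - 1)/t)·((t/m)/(1 - e^{-t/m}) - 1) dt`, integrand extended by `0` at `t = 0`. -/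
def Tfun (m : ℕ) (s : ℝ) : ℝ :=
  ∫ t in (0:ℝ)..s,
    if t = 0 then 0 else
      ((Real.exp t - 1) / t) * ((t / (m : ℝ)) / (1 - Real.exp (-t / (m : ℝ))) - 1)

end

/-!
Classifying permutations by cycle type gives `n p_{n,m} = ∑_{1 ≤ j ≤ m} p_{n-j,m}` for `n ≥ m`, the
discrete counterpart of `u ρ(u) = ∫_{u-1}^u ρ`. Sampling the integral equation at the points
`U_n = (n + 1/2) / (m + 1/2)` shows that `ρ(U_n)` satisfies the same recurrence up to the error of
the midpoint rule, whose relative size is `O((log u / m)²)`, so a comparison principle for such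
recurrences yields `p_{n,m} = ρ(U_n) (1 + O(log(u + 1) / m))`.

It remains to compare `ρ(U_n)` with `ρ(u)`, where `u - U_n ≈ u / (2m)`. Put `r = -ρ'/ρ`. The sign of
`r'(u)` is that of `r(u) - r(u - 1) - 1/u`, and this gap is positive for `u ≥ 2`: at a first failure
`T` it would contradict `∫_{T-1}^T (r(T) - r(x)) ρ(x) dx = ρ(T)`. Hence `ρ` is log-concave.
Inserting the resulting exponential bounds for `ρ` on `[u - 1, u]` into the integral equation gives
`ξ(u) ≤ r(u) ≤ ξ(u) + 1/u`, hence `log ρ(U_n) - log ρ(u) = u ξ(u) / (2m) + O(log(u + 1) / m)`.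
-/

section CycleIndex

/-- The number `z_s = ∏ k, k ^ mₖ * mₖ!`, where `mₖ` is the multiplicity of `k` in `s`: the order of
the centralizer of a permutation whose cycle lengths, fixed points included, form `s`. -/
def centralizerOrder (s : Multiset ℕ) : ℕ :=
  s.prod * ∏ k ∈ s.toFinset, (s.count k).factorial

theorem centralizerOrder_cons (a : ℕ) (s : Multiset ℕ) :
    centralizerOrder (a ::ₘ s) = a * (s.count a + 1) * centralizerOrder s := by
  have extend_support : ∏ k ∈ s.toFinset, (s.count k).factorial =
      ∏ k ∈ (a ::ₘ s).toFinset, (s.count k).factorial := by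
    refine Finset.prod_subset (fun x hx ↦ ?_) fun x _ hx ↦ ?_
    · simp only [Multiset.mem_toFinset, Multiset.mem_cons] at hx ⊢
      exact Or.inr hx
    · rw [Multiset.count_eq_zero_of_notMem (by simpa using hx), Nat.factorial_zero]
  have factorial_count (k : ℕ) : ((a ::ₘ s).count k).factorial =
      (s.count k).factorial * if k = a then s.count a + 1 else 1 := by
    split_ifs with hk
    · rw [hk, Multiset.count_cons_self, Nat.factorial_succ, mul_comm]
    · rw [Multiset.count_cons_of_ne hk, mul_one]
  rw [centralizerOrder, centralizerOrder, extend_support,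
    Finset.prod_congr rfl fun k _ ↦ factorial_count k, Finset.prod_mul_distrib,
    Finset.prod_ite_eq', if_pos (Multiset.mem_toFinset.2 (Multiset.mem_cons_self a s)),
    Multiset.prod_cons]
  ring

theorem centralizerOrder_pos {s : Multiset ℕ} (hs : ∀ a ∈ s, 0 < a) : 0 < centralizerOrder s := by
  refine Nat.mul_pos (Nat.pos_of_ne_zero fun h ↦ ?_)
    (Finset.prod_pos fun k _ ↦ Nat.factorial_pos _)
  exact (hs 0 (Multiset.prod_eq_zero_iff.1 h)).ne rfl

theorem centralizerOrder_add_replicate_one {s : Multiset ℕ} (hs : 1 ∉ s) (k : ℕ) :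
    centralizerOrder (s + Multiset.replicate k 1) = k.factorial * centralizerOrder s := by
  induction k with
  | zero => simp
  | succ k ih =>
    rw [Multiset.replicate_succ, Multiset.add_cons, centralizerOrder_cons, ih, Multiset.count_add,
      Multiset.count_eq_zero_of_notMem hs, Multiset.count_replicate_self, Nat.factorial_succ]
    ring

variable {K : Type*} [Field K]

/-- The cycle index of the symmetric group on `n` letters: the average over all permutations of
the product of `x k` over their cycle lengths `k`, fixed points included, with the permutations
grouped by cycle type. -/
def cycleIndex (x : ℕ → K) (n : ℕ) : K :=
  ∑ l : n.Partition, (l.parts.map x).prod / centralizerOrder l.parts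

variable [CharZero K]

theorem sum_partition_count_eq_mul_cycleIndex (x : ℕ → K) {n j : ℕ} (hj : 1 ≤ j) (hjn : j ≤ n) :
    ∑ l : n.Partition,
      j * l.parts.count j * ((l.parts.map x).prod / centralizerOrder l.parts) =
      x j * cycleIndex x (n - j) := by
  let f (s : Multiset ℕ) : K := j * s.count j * ((s.map x).prod / centralizerOrder s)
  have remove_part (q : (n - j).Partition) :
      f (j ::ₘ q.parts) = x j * ((q.parts.map x).prod / centralizerOrder q.parts) := by
    have hq : (centralizerOrder q.parts : K) ≠ 0 :=
      Nat.cast_ne_zero.2 (centralizerOrder_pos fun _ ha ↦ q.parts_pos ha).ne'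
    have hj0 : (j : K) ≠ 0 := Nat.cast_ne_zero.2 (by lia)
    have hcount : (q.parts.count j + 1 : K) ≠ 0 := Nat.cast_add_one_ne_zero _
    simp only [f]
    rw [centralizerOrder_cons, Multiset.count_cons_self, Multiset.map_cons, Multiset.prod_cons]
    push_cast
    field_simp
  calc ∑ l : n.Partition, f l.parts
      = ∑ l ∈ Finset.univ.filter fun l : n.Partition ↦ j ∈ l.parts, f l.parts := by
        refine (Finset.sum_subset (Finset.subset_univ _) fun l _ hl ↦ ?_).symm
        have : l.parts.count j = 0 := Multiset.count_eq_zero_of_notMem (by simpa using hl)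
        simp only [f, this, Nat.cast_zero, mul_zero, zero_mul]
    _ = ∑ l : {l : n.Partition // j ∈ l.parts}, f l.1.parts :=
        Finset.sum_subtype _ (by simp) fun l : n.Partition ↦ f l.parts
    _ = ∑ q : (n - j).Partition, f (j ::ₘ q.parts) := by
        rw [← Equiv.sum_comp (Nat.Partition.partitionWithPartEquiv hj hjn).symm]
        simp only [Nat.Partition.partitionWithPartEquiv_symm_apply_parts]
    _ = x j * cycleIndex x (n - j) := by
        rw [cycleIndex, Finset.mul_sum]
        exact Finset.sum_congr rfl fun q _ ↦ remove_part q

theorem natCast_mul_cycleIndex (x : ℕ → K) (n : ℕ) :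
    n * cycleIndex x n = ∑ j ∈ Finset.Icc 1 n, x j * cycleIndex x (n - j) := by
  have sum_parts (l : n.Partition) :
      (n : K) = ∑ j ∈ Finset.Icc 1 n, (j : K) * l.parts.count j := by
    have h := Finset.sum_multiset_count_of_subset l.parts (Finset.Icc 1 n) fun j hj ↦ by
      have hj := Multiset.mem_toFinset.1 hj
      exact Finset.mem_Icc.2 ⟨l.parts_pos hj, l.le_of_mem_parts hj⟩
    rw [l.parts_sum] at h
    conv_lhs => rw [h]
    simp only [smul_eq_mul, Nat.cast_sum, Nat.cast_mul, mul_comm]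
  calc n * cycleIndex x n
      = ∑ l : n.Partition, ∑ j ∈ Finset.Icc 1 n,
          j * l.parts.count j * ((l.parts.map x).prod / centralizerOrder l.parts) := by
        rw [cycleIndex, Finset.mul_sum]
        refine Finset.sum_congr rfl fun l _ ↦ ?_
        rw [← Finset.sum_mul, ← sum_parts l]
    _ = ∑ j ∈ Finset.Icc 1 n, x j * cycleIndex x (n - j) := by
        rw [Finset.sum_comm]
        refine Finset.sum_congr rfl fun j hj ↦ ?_
        rw [Finset.mem_Icc] at hj
        exact sum_partition_count_eq_mul_cycleIndex x hj.1 hj.2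

variable {α : Type*} [Fintype α] [DecidableEq α]

theorem card_perm_partition_eq_mul_centralizerOrder (l : (Fintype.card α).Partition) :
    (Finset.univ.filter fun σ : Equiv.Perm α ↦ σ.partition = l).card * centralizerOrder l.parts =
      (Fintype.card α).factorial := by
  set s := l.parts.filter (2 ≤ ·)
  have parts_eq : l.parts = s + Multiset.replicate (l.parts.count 1) 1 := by
    have h1 : l.parts.filter (¬2 ≤ ·) = l.parts.filter (· = 1) :=
      Multiset.filter_congr fun x hx ↦ by have := l.parts_pos hx; lia
    rw [← Multiset.filter_eq' l.parts 1, ← h1]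
    exact (Multiset.filter_add_not _ l.parts).symm
  have sum_eq : s.sum + l.parts.count 1 = Fintype.card α := by
    have := l.parts_sum
    rw [parts_eq] at this
    simpa using this
  have fiber_eq : (Finset.univ.filter fun σ : Equiv.Perm α ↦ σ.partition = l) =
      Finset.univ.filter fun σ : Equiv.Perm α ↦ σ.cycleType = s := by
    refine Finset.filter_congr fun σ _ ↦ ⟨fun h ↦ ?_, fun h ↦ Nat.Partition.ext ?_⟩
    · rw [← Equiv.Perm.filter_parts_partition_eq_cycleType, h]
    · rw [Equiv.Perm.parts_partition, ← Equiv.Perm.sum_cycleType, h, parts_eq]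
      congr 2
      lia
  have h := Equiv.Perm.card_of_cycleType_mul_eq α s
  rw [if_pos ⟨by lia, fun a ha ↦ (Multiset.mem_filter.1 ha).2⟩,
    show Fintype.card α - s.sum = l.parts.count 1 by lia] at h
  rw [fiber_eq, ← h, parts_eq, centralizerOrder_add_replicate_one fun h1 ↦ by
    have := (Multiset.mem_filter.1 h1).2
    lia, ← parts_eq, centralizerOrder]
  ring

theorem sum_perm_prod_partition (x : ℕ → K) :
    ∑ σ : Equiv.Perm α, (σ.partition.parts.map x).prod =
      (Fintype.card α).factorial * cycleIndex x (Fintype.card α) := by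
  rw [← Finset.sum_fiberwise Finset.univ Equiv.Perm.partition, cycleIndex, Finset.mul_sum]
  refine Finset.sum_congr rfl fun l _ ↦ ?_
  have hl : (centralizerOrder l.parts : K) ≠ 0 :=
    Nat.cast_ne_zero.2 (centralizerOrder_pos fun _ ha ↦ l.parts_pos ha).ne'
  rw [Finset.sum_congr rfl fun σ hσ ↦ by rw [(Finset.mem_filter.1 hσ).2], Finset.sum_const,
    nsmul_eq_mul, ← card_perm_partition_eq_mul_centralizerOrder l]
  push_cast
  field_simp

end CycleIndex

section PermProb

theorem permProb_nonneg (n m : ℕ) : 0 ≤ permProb n m := by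
  unfold permProb
  positivity

theorem permProb_eq_cycleIndex {m : ℕ} (hm : 1 ≤ m) (n : ℕ) :
    permProb n m = cycleIndex (fun k ↦ if k ≤ m then (1 : ℝ) else 0) n := by
  classical
  have prod_indicator (σ : Equiv.Perm (Fin n)) :
      (σ.partition.parts.map fun k ↦ if k ≤ m then (1 : ℝ) else 0).prod =
        if ∀ c ∈ σ.cycleType, c ≤ m then 1 else 0 := by
    rw [Equiv.Perm.parts_partition, Multiset.map_add, Multiset.prod_add, Multiset.map_replicate,
      if_pos hm, Multiset.prod_replicate, one_pow, mul_one]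
    split_ifs with h
    · exact Multiset.prod_eq_one fun y hy ↦ by
        obtain ⟨c, hc, rfl⟩ := Multiset.mem_map.1 hy
        exact if_pos (h c hc)
    · push Not at h
      obtain ⟨c, hc, hcm⟩ := h
      exact Multiset.prod_eq_zero (Multiset.mem_map.2 ⟨c, hc, if_neg hcm.not_ge⟩)
  have h := sum_perm_prod_partition (α := Fin n) fun k ↦ if k ≤ m then (1 : ℝ) else 0
  simp only [prod_indicator, Finset.sum_boole, Fintype.card_fin] at h
  rw [permProb, Nat.card_eq_fintype_card, Fintype.card_subtype, h,
    mul_div_cancel_left₀ _ (Nat.cast_ne_zero.2 n.factorial_ne_zero)]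

theorem natCast_mul_permProb {n m : ℕ} (hm : 1 ≤ m) (hmn : m ≤ n) :
    n * permProb n m = ∑ j ∈ Finset.Icc 1 m, permProb (n - j) m := by
  simp only [permProb_eq_cycleIndex hm, natCast_mul_cycleIndex, ite_mul, one_mul, zero_mul]
  rw [← Finset.sum_filter]
  congr 1
  ext j
  simp only [Finset.mem_filter, Finset.mem_Icc]
  lia

theorem permProb_of_le {n m : ℕ} (hnm : n ≤ m) : permProb n m = 1 := by
  have friable (σ : Equiv.Perm (Fin n)) (c : ℕ) (hc : c ∈ σ.cycleType) : c ≤ m :=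
    calc c ≤ σ.support.card := Equiv.Perm.le_card_support_of_mem_cycleType hc
      _ ≤ Fintype.card (Fin n) := Finset.card_le_univ _
      _ = n := Fintype.card_fin n
      _ ≤ m := hnm
  rw [permProb, Nat.card_congr (Equiv.subtypeUnivEquiv friable), Nat.card_eq_fintype_card,
    Fintype.card_perm, Fintype.card_fin, div_self (Nat.cast_ne_zero.2 n.factorial_ne_zero)]

end PermProb

section DelayedSums

theorem le_of_delayed_sum_le {a b : ℕ → ℝ} {m N n : ℕ} (initial : ∀ k ≤ N, a k ≤ b k)
    (step : ∀ k, N < k → k ≤ n →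
      k * a k + ∑ j ∈ Finset.Icc 1 m, b (k - j) ≤ k * b k + ∑ j ∈ Finset.Icc 1 m, a (k - j)) :
    a n ≤ b n := by
  suffices h : ∀ k ≤ n, a k ≤ b k from h n le_rfl
  intro k
  induction k using Nat.strong_induction_on with
  | h k ih =>
    intro hkn
    rcases le_or_gt k N with hk | hk
    · exact initial k hk
    have sum_le : ∑ j ∈ Finset.Icc 1 m, a (k - j) ≤ ∑ j ∈ Finset.Icc 1 m, b (k - j) :=
      Finset.sum_le_sum fun j hj ↦ by
        have := (Finset.mem_Icc.1 hj).1
        exact ih (k - j) (by lia) (by lia)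
    have hk0 : (0 : ℝ) < k := by exact_mod_cast Nat.zero_lt_of_lt hk
    exact le_of_mul_le_mul_left (by linarith [step k hk hkn]) hk0

theorem sum_Icc_one_natCast (m : ℕ) : ∑ j ∈ Finset.Icc 1 m, (j : ℝ) = m * (m + 1) / 2 := by
  induction m with
  | zero => simp
  | succ m ih =>
    rw [Finset.sum_Icc_succ_top (by lia), ih]
    push_cast
    ring

theorem mul_sum_le_sum_mul_exp {f : ℕ → ℝ} {m : ℕ} {ε : ℝ} (hε : 0 ≤ ε)
    (hf : MonotoneOn f (Finset.Icc 1 m)) (f_nonneg : ∀ j ∈ Finset.Icc 1 m, 0 ≤ f j) :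
    (1 + ε * (m + 1) / 2) * ∑ j ∈ Finset.Icc 1 m, f j ≤
      ∑ j ∈ Finset.Icc 1 m, f j * exp (ε * j) := by
  rcases m.eq_zero_or_pos with rfl | hm
  · simp
  have hm : (0 : ℝ) < m := by exact_mod_cast hm
  have exp_mono : Monotone fun j : ℕ ↦ exp (ε * j) := fun i j hij ↦ exp_le_exp.2 (by gcongr)
  have chebyshev : (∑ j ∈ Finset.Icc 1 m, f j) * ∑ j ∈ Finset.Icc 1 m, exp (ε * j) ≤
      m * ∑ j ∈ Finset.Icc 1 m, f j * exp (ε * j) := by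
    simpa using (hf.monovaryOn (exp_mono.monotoneOn _)).sum_mul_sum_le_card_mul_sum
  have exp_sum : m * (1 + ε * (m + 1) / 2) ≤ ∑ j ∈ Finset.Icc 1 m, exp (ε * j) :=
    calc m * (1 + ε * (m + 1) / 2) = ∑ j ∈ Finset.Icc 1 m, (ε * j + 1) := by
          rw [Finset.sum_add_distrib, ← Finset.mul_sum, sum_Icc_one_natCast, Finset.sum_const,
            Nat.card_Icc, Nat.add_sub_cancel, nsmul_eq_mul]
          ring
      _ ≤ ∑ j ∈ Finset.Icc 1 m, exp (ε * j) := Finset.sum_le_sum fun j _ ↦ add_one_le_exp _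
  refine le_of_mul_le_mul_left ?_ hm
  calc m * ((1 + ε * (m + 1) / 2) * ∑ j ∈ Finset.Icc 1 m, f j)
      = (∑ j ∈ Finset.Icc 1 m, f j) * (m * (1 + ε * (m + 1) / 2)) := by ring
    _ ≤ (∑ j ∈ Finset.Icc 1 m, f j) * ∑ j ∈ Finset.Icc 1 m, exp (ε * j) :=
        mul_le_mul_of_nonneg_left exp_sum (Finset.sum_nonneg f_nonneg)
    _ ≤ _ := chebyshev

theorem le_sum_mul_exp_of_one_sub_mul_le {f : ℕ → ℝ} {m : ℕ} {x δ : ℝ} (hm : 1 ≤ m) (hδ : 0 ≤ δ)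
    (hδ2 : δ ≤ 1 / 2) (hx : 0 ≤ x) (hf : MonotoneOn f (Finset.Icc 1 m))
    (f_nonneg : ∀ j ∈ Finset.Icc 1 m, 0 ≤ f j)
    (le_sum : (1 - δ) * x ≤ ∑ j ∈ Finset.Icc 1 m, f j) :
    x ≤ ∑ j ∈ Finset.Icc 1 m, f j * exp (4 * δ / m * j) := by
  have hm0 : (0 : ℝ) < m := mod_cast hm
  have gain : 1 + 2 * δ ≤ 1 + 4 * δ / m * (m + 1) / 2 := by
    have : 0 ≤ 4 * δ / m := by positivity
    have : 4 * δ / m * m = 4 * δ := div_mul_cancel₀ _ hm0.ne'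
    linarith
  calc x ≤ (1 + 2 * δ) * ((1 - δ) * x) := by
        nlinarith [mul_nonneg (mul_nonneg hδ (sub_nonneg.2 hδ2)) hx]
    _ ≤ (1 + 4 * δ / m * (m + 1) / 2) * ∑ j ∈ Finset.Icc 1 m, f j :=
        mul_le_mul gain le_sum (mul_nonneg (by linarith) hx) (by positivity)
    _ ≤ _ := mul_sum_le_sum_mul_exp (by positivity) hf f_nonneg

theorem sum_Icc_natCast_sub_add_le {m k : ℕ} (hk : m ≤ k) :
    ∑ j ∈ Finset.Icc 1 m, ((k - j : ℕ) : ℝ) + m ^ 2 / 2 ≤ k ^ 2 := by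
  have sum_eq : ∑ j ∈ Finset.Icc 1 m, ((k - j : ℕ) : ℝ) = m * k - m * (m + 1) / 2 := by
    rw [← sum_Icc_one_natCast, Finset.sum_congr rfl fun j hj ↦
      Nat.cast_sub (R := ℝ) ((Finset.mem_Icc.1 hj).2.trans hk), Finset.sum_sub_distrib]
    simp
  have hk' : (m : ℝ) ≤ k := mod_cast hk
  rw [sum_eq]
  nlinarith [mul_nonneg (k.cast_nonneg (α := ℝ)) (sub_nonneg.2 hk')]

end DelayedSums

section Calculus

theorem add_mul_sub_le_of_hasDerivAt_of_monotoneOn {s : Set ℝ} {f f' : ℝ → ℝ} (hs : Convex ℝ s)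
    (hf : ContinuousOn f s) (hf' : ∀ x ∈ interior s, HasDerivAt f (f' x) x)
    (mono : MonotoneOn f' s) {x y : ℝ} (hx : x ∈ s) (hy : y ∈ s) :
    f x + f' x * (y - x) ≤ f y := by
  have differentiableOn {a b : ℝ} (ha : a ∈ s) (hb : b ∈ s) :
      DifferentiableOn ℝ f (interior (Set.Icc a b)) := fun t ht ↦
    (hf' t (interior_mono (hs.ordConnected.out ha hb) ht)).differentiableAt.differentiableWithinAt
  rcases le_total x y with hxy | hyx
  · have := Convex.mul_sub_le_image_sub_of_le_deriv (C := f' x) (convex_Icc x y)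
      (hf.mono (hs.ordConnected.out hx hy)) (differentiableOn hx hy)
      (fun t ht ↦ by
        rw [(hf' t (interior_mono (hs.ordConnected.out hx hy) ht)).deriv]
        have ht := interior_subset ht
        exact mono hx (hs.ordConnected.out hx hy ht) ht.1)
      x (Set.left_mem_Icc.2 hxy) y (Set.right_mem_Icc.2 hxy) hxy
    linarith
  · have := Convex.image_sub_le_mul_sub_of_deriv_le (C := f' x) (convex_Icc y x)
      (hf.mono (hs.ordConnected.out hy hx)) (differentiableOn hy hx)
      (fun t ht ↦ by
        rw [(hf' t (interior_mono (hs.ordConnected.out hy hx) ht)).deriv]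
        have ht := interior_subset ht
        exact mono (hs.ordConnected.out hy hx ht) hx ht.2)
      y (Set.left_mem_Icc.2 hyx) x (Set.right_mem_Icc.2 hyx) hyx
    linarith

theorem abs_mul_exp_sub_one_le (x y : ℝ) : |x * exp y - 1| ≤ (|x - 1| + |y|) * exp |y| := by
  have exp_bound : |exp y - 1| ≤ |y| * exp |y| := by
    rcases le_total 0 y with hy | hy
    · rw [abs_of_nonneg (sub_nonneg.2 (one_le_exp hy)), abs_of_nonneg hy]
      have := mul_le_mul_of_nonneg_right (one_sub_le_exp_neg y) (exp_pos y).le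
      rw [← exp_add, neg_add_cancel, exp_zero] at this
      linarith
    · rw [abs_of_nonpos (sub_nonpos.2 (exp_le_one_iff.2 hy)), abs_of_nonpos hy]
      have := le_mul_of_one_le_right (neg_nonneg.2 hy) (one_le_exp (neg_nonneg.2 hy))
      linarith [add_one_le_exp y]
  calc |x * exp y - 1| = |(x - 1) * exp y + (exp y - 1)| := by ring_nf
    _ ≤ |(x - 1) * exp y| + |exp y - 1| := abs_add_le _ _
    _ ≤ |x - 1| * exp |y| + |y| * exp |y| := by
      rw [abs_mul, abs_of_pos (exp_pos y)]
      gcongr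
      exact le_abs_self y
    _ = (|x - 1| + |y|) * exp |y| := by ring

theorem forall_pos_of_forall_lt_pos {f : ℝ → ℝ} {a : ℝ} (hf : ContinuousOn f (Set.Ici a))
    (step : ∀ T, a ≤ T → (∀ u ∈ Set.Ico a T, 0 < f u) → 0 < f T) {u : ℝ} (hu : a ≤ u) :
    0 < f u := by
  by_contra hfu
  let B := Set.Ici a ∩ f ⁻¹' Set.Iic 0
  have B_nonempty : B.Nonempty := ⟨u, hu, not_lt.1 hfu⟩
  have B_bddBelow : BddBelow B := ⟨a, fun x hx ↦ hx.1⟩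
  have B_closed : IsClosed B := hf.preimage_isClosed_of_isClosed isClosed_Ici isClosed_Iic
  have first_mem : sInf B ∈ B := B_closed.csInf_mem B_nonempty B_bddBelow
  refine (step (sInf B) first_mem.1 fun v hv ↦ ?_).not_ge first_mem.2
  by_contra hfv
  exact (csInf_le B_bddBelow ⟨hv.1, not_lt.1 hfv⟩).not_gt hv.2

end Calculus

section MidpointRule

open intervalIntegral

variable {f f' : ℝ → ℝ} {x c h : ℝ}

/-- The error of the midpoint rule for `f` with `k` cells of width `2 * h`, centred at the points
`x - 2 * h * j` with `1 ≤ j ≤ k`, completed by the half cell `[x - h, x]` on which `f` is sampled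
at its right endpoint. -/
noncomputable def midpointError (f : ℝ → ℝ) (x h : ℝ) (k : ℕ) : ℝ :=
  (∫ t in (x - (2 * k + 1) * h)..x, f t) - h * f x -
    2 * h * ∑ j ∈ Finset.Icc 1 k, f (x - 2 * h * j)

theorem midpointError_zero (f : ℝ → ℝ) (x h : ℝ) :
    midpointError f x h 0 = (∫ t in (x - h)..x, f t) - h * f x := by
  simp [midpointError]

theorem midpointError_succ {k : ℕ} (hh : 0 ≤ h)
    (hf : ∀ a ∈ Set.Icc (x - (2 * (k + 1) + 1) * h) x, ∀ b ∈ Set.Icc (x - (2 * (k + 1) + 1) * h) x,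
      IntervalIntegrable f MeasureTheory.volume a b) :
    midpointError f x h (k + 1) = midpointError f x h k +
      ((∫ t in (x - 2 * h * (k + 1) - h)..(x - 2 * h * (k + 1) + h), f t) -
        2 * h * f (x - 2 * h * (k + 1))) := by
  have hk : 0 ≤ k * h := by positivity
  have split := integral_add_adjacent_intervals
    (hf (x - 2 * h * (k + 1) - h) ⟨by linarith, by linarith⟩
      (x - 2 * h * (k + 1) + h) ⟨by linarith, by linarith⟩)
    (hf _ ⟨by linarith, by linarith⟩ x ⟨by linarith, le_rfl⟩)
  rw [midpointError, midpointError, Finset.sum_Icc_succ_top (by lia)]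
  push_cast
  rw [show x - (2 * ((k : ℝ) + 1) + 1) * h = x - 2 * h * (k + 1) - h by ring, ← split,
    show x - (2 * (k : ℝ) + 1) * h = x - 2 * h * (k + 1) + h by ring]
  ring

theorem integral_mem_Icc_of_antitoneOn {a b : ℝ} (hab : a ≤ b) (hf : AntitoneOn f (Set.Icc a b)) :
    ∫ t in a..b, f t ∈ Set.Icc ((b - a) * f b) ((b - a) * f a) := by
  have integrable : IntervalIntegrable f MeasureTheory.volume a b := by
    rw [← Set.uIcc_of_le hab] at hf
    exact hf.intervalIntegrable
  rw [← smul_eq_mul, ← smul_eq_mul, ← integral_const, ← integral_const]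
  exact ⟨integral_mono_on hab intervalIntegrable_const integrable fun t ht ↦
      hf ht (Set.right_mem_Icc.2 hab) ht.2,
    integral_mono_on hab integrable intervalIntegrable_const fun t ht ↦
      hf (Set.left_mem_Icc.2 hab) ht ht.1⟩

theorem abs_midpointError_le_of_antitoneOn {k : ℕ} (hh : 0 ≤ h)
    (hf : AntitoneOn f (Set.Icc (x - (2 * k + 1) * h) x)) :
    |midpointError f x h k| ≤ h * (f (x - (2 * k + 1) * h) - f x) := by
  induction k with
  | zero =>
    rw [midpointError_zero, abs_le]
    rw [Nat.cast_zero, mul_zero, zero_add, one_mul] at hf ⊢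
    have := integral_mem_Icc_of_antitoneOn (by linarith) hf
    rw [sub_sub_cancel] at this
    constructor <;> linarith [this.1, this.2, mul_sub h (f (x - h)) (f x)]
  | succ k ih =>
    push_cast at hf ⊢
    have hk : 0 ≤ k * h := by positivity
    have ih := ih (hf.mono (Set.Icc_subset_Icc_left (by linarith)))
    have integrable (a) (ha : a ∈ Set.Icc (x - (2 * (k + 1) + 1) * h) x) (b)
        (hb : b ∈ Set.Icc (x - (2 * (k + 1) + 1) * h) x) :
        IntervalIntegrable f MeasureTheory.volume a b :=
      (hf.mono (Set.ordConnected_Icc.uIcc_subset ha hb)).intervalIntegrable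
    rw [midpointError_succ hh integrable]
    set c := x - 2 * h * (k + 1) with hc
    rw [show x - (2 * (k : ℝ) + 1) * h = c + h by rw [hc]; ring] at ih
    rw [show x - (2 * ((k : ℝ) + 1) + 1) * h = c - h by rw [hc]; ring] at hf integrable ⊢
    have hcx : c + h ≤ x := by linarith
    have left := integral_mem_Icc_of_antitoneOn (by linarith)
      (hf.mono (Set.Icc_subset_Icc_right (by linarith : c ≤ x)))
    have right := integral_mem_Icc_of_antitoneOn (by linarith)
      (hf.mono (Set.Icc_subset_Icc (by linarith : c - h ≤ c) hcx))
    rw [← integral_add_adjacent_intervals (integrable (c - h) ⟨le_rfl, by linarith⟩ c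
      ⟨by linarith, by linarith⟩) (integrable c ⟨by linarith, by linarith⟩ (c + h)
      ⟨by linarith, hcx⟩)]
    rw [sub_sub_cancel] at left
    rw [add_sub_cancel_left] at right
    rw [abs_le] at ih ⊢
    constructor <;> linarith [left.1, left.2, right.1, right.2]

theorem monotoneOn_of_subgradient {s : Set ℝ}
    (subgrad : ∀ x ∈ s, ∀ y ∈ s, f x + f' x * (y - x) ≤ f y) : MonotoneOn f' s := by
  intro x hx y hy hxy
  rcases hxy.eq_or_lt with rfl | hlt
  · rfl
  · refine le_of_mul_le_mul_right ?_ (sub_pos.2 hlt)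
    linarith [subgrad x hx y hy, subgrad y hy x hx]

theorem integral_le_of_le_affine {a b M K : ℝ} (hab : a ≤ b) (hf : ContinuousOn f (Set.Icc a b))
    (le_affine : ∀ t ∈ Set.Icc a b, f t ≤ M + K * (t - c)) :
    ∫ t in a..b, f t ≤ (b - a) * M + K * ((b - c) ^ 2 - (a - c) ^ 2) / 2 :=
  calc ∫ t in a..b, f t ≤ ∫ t in a..b, (M + K * (t - c)) :=
        integral_mono_on hab (hf.intervalIntegrable_of_Icc hab)
          (Continuous.intervalIntegrable (by fun_prop) _ _) le_affine
    _ = (b - a) * M + K * ((b - c) ^ 2 - (a - c) ^ 2) / 2 := by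
        rw [integral_add (by simp) (Continuous.intervalIntegrable (by fun_prop) _ _),
          integral_const, integral_const_mul, integral_comp_sub_right (fun t ↦ t), integral_id,
          smul_eq_mul, mul_div_assoc]

theorem le_integral_of_affine_le {a b M K : ℝ} (hab : a ≤ b) (hf : ContinuousOn f (Set.Icc a b))
    (affine_le : ∀ t ∈ Set.Icc a b, M + K * (t - c) ≤ f t) :
    (b - a) * M + K * ((b - c) ^ 2 - (a - c) ^ 2) / 2 ≤ ∫ t in a..b, f t := by
  have := integral_le_of_le_affine (f := fun t ↦ -f t) (M := -M) (K := -K) (c := c) hab hf.neg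
    fun t ht ↦ by linarith [affine_le t ht]
  rw [integral_neg] at this
  linarith

theorem midpoint_cell_mem_Icc_of_subgradient (hh : 0 ≤ h)
    (hf : ContinuousOn f (Set.Icc (c - h) (c + h)))
    (subgrad : ∀ x ∈ Set.Icc (c - h) (c + h), ∀ y ∈ Set.Icc (c - h) (c + h),
      f x + f' x * (y - x) ≤ f y) :
    (∫ t in (c - h)..(c + h), f t) - 2 * h * f c ∈
      Set.Icc 0 (h ^ 2 / 2 * (f' (c + h) - f' (c - h))) := by
  have mono := monotoneOn_of_subgradient subgrad
  have left_sub : Set.Icc (c - h) c ⊆ Set.Icc (c - h) (c + h) :=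
    Set.Icc_subset_Icc_right (by linarith)
  have right_sub : Set.Icc c (c + h) ⊆ Set.Icc (c - h) (c + h) :=
    Set.Icc_subset_Icc_left (by linarith)
  have hc : c ∈ Set.Icc (c - h) (c + h) := left_sub (Set.right_mem_Icc.2 (by linarith))
  have lower := le_integral_of_affine_le (M := f c) (K := f' c) (c := c) (by linarith) hf
    fun t ht ↦ subgrad c hc t ht
  have left := integral_le_of_le_affine (M := f c) (K := f' (c - h)) (c := c) (by linarith)
    (hf.mono left_sub) fun t ht ↦ by
      have := mul_le_mul_of_nonpos_right
        (mono (left_sub (Set.left_mem_Icc.2 (by linarith))) (left_sub ht) ht.1)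
        (sub_nonpos.2 ht.2)
      linarith [subgrad t (left_sub ht) c hc]
  have right := integral_le_of_le_affine (M := f c) (K := f' (c + h)) (c := c) (by linarith)
    (hf.mono right_sub) fun t ht ↦ by
      have := mul_le_mul_of_nonneg_right
        (mono (right_sub ht) (right_sub (Set.right_mem_Icc.2 (by linarith))) ht.2)
        (sub_nonneg.2 ht.1)
      linarith [subgrad t (right_sub ht) c hc]
  have split := integral_add_adjacent_intervals
    ((hf.mono left_sub).intervalIntegrable_of_Icc (by linarith) (μ := MeasureTheory.volume))
    ((hf.mono right_sub).intervalIntegrable_of_Icc (by linarith))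
  constructor <;> nlinarith

theorem midpointError_mem_Icc_of_subgradient {k : ℕ} (hh : 0 ≤ h)
    (hf : ContinuousOn f (Set.Icc (x - (2 * k + 1) * h) x))
    (subgrad : ∀ y ∈ Set.Icc (x - (2 * k + 1) * h) x, ∀ z ∈ Set.Icc (x - (2 * k + 1) * h) x,
      f y + f' y * (z - y) ≤ f z)
    (hx : f' x ≤ 0) :
    midpointError f x h k ∈ Set.Icc 0 (h ^ 2 / 2 * -f' (x - (2 * k + 1) * h)) := by
  induction k with
  | zero =>
    rw [midpointError_zero]
    rw [Nat.cast_zero, mul_zero, zero_add, one_mul] at hf subgrad ⊢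
    have mono := monotoneOn_of_subgradient subgrad
    have x_mem : x ∈ Set.Icc (x - h) x := Set.right_mem_Icc.2 (by linarith)
    have upper := integral_le_of_le_affine (M := f x) (K := f' (x - h)) (c := x) (by linarith) hf
      fun t ht ↦ by
        have := mul_le_mul_of_nonpos_right (mono (Set.left_mem_Icc.2 (by linarith)) ht ht.1)
          (sub_nonpos.2 ht.2)
        linarith [subgrad t ht x x_mem]
    have lower := le_integral_of_affine_le (M := f x) (K := 0) (c := x) (by linarith) hf
      fun t ht ↦ by
        have := mul_nonneg_of_nonpos_of_nonpos hx (sub_nonpos.2 ht.2)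
        linarith [subgrad x x_mem t ht]
    constructor <;> linarith
  | succ k ih =>
    push_cast at hf subgrad ⊢
    have hk : 0 ≤ k * h := by positivity
    have sub : Set.Icc (x - (2 * k + 1) * h) x ⊆ Set.Icc (x - (2 * (k + 1) + 1) * h) x :=
      Set.Icc_subset_Icc_left (by linarith)
    have ih := ih (hf.mono sub) fun y hy z hz ↦ subgrad y (sub hy) z (sub hz)
    rw [midpointError_succ hh fun a ha b hb ↦
      (hf.mono (Set.ordConnected_Icc.uIcc_subset ha hb)).intervalIntegrable]
    set c := x - 2 * h * (k + 1) with hc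
    rw [show x - (2 * (k : ℝ) + 1) * h = c + h by rw [hc]; ring] at ih
    rw [show x - (2 * ((k : ℝ) + 1) + 1) * h = c - h by rw [hc]; ring] at hf subgrad ⊢
    have cell_sub : Set.Icc (c - h) (c + h) ⊆ Set.Icc (c - h) x :=
      Set.Icc_subset_Icc_right (by linarith)
    have cell := midpoint_cell_mem_Icc_of_subgradient hh (hf.mono cell_sub) fun y hy z hz ↦
      subgrad y (cell_sub hy) z (cell_sub hz)
    constructor <;> linarith [ih.1, ih.2, cell.1, cell.2]

end MidpointRule

/-- Minus the derivative of the Dickman function: `ρ'(t) = -ρ(t - 1) / t` for `t > 1`. -/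
noncomputable def decay (ρ : ℝ → ℝ) (t : ℝ) : ℝ := ρ (t - 1) / t

/-- Minus the logarithmic derivative of the Dickman function: `(log ρ)'(t) = -logDecay ρ t` for
`t > 1`. It is the quantity that `ξ(t)` approximates. -/
noncomputable def logDecay (ρ : ℝ → ℝ) (t : ℝ) : ℝ := ρ (t - 1) / (t * ρ t)

namespace IsDickman

variable {ρ : ℝ → ℝ} {a b t u x y T : ℝ}

theorem pos (h : IsDickman ρ) (ht : 0 ≤ t) : 0 < ρ t := h.2.1 t ht

theorem eq_one (h : IsDickman ρ) (ht : 0 ≤ t) (ht1 : t ≤ 1) : ρ t = 1 := h.2.2.1 t ⟨ht, ht1⟩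

theorem continuousOn_Icc (h : IsDickman ρ) (ha : 0 ≤ a) : ContinuousOn ρ (Set.Icc a b) :=
  h.1.mono fun _ hx ↦ ha.trans hx.1

theorem continuousOn_Ici_one (h : IsDickman ρ) : ContinuousOn ρ (Set.Ici 1) :=
  h.1.mono (Set.Ici_subset_Ici.2 zero_le_one)

theorem intervalIntegrable (h : IsDickman ρ) (ha : 0 ≤ a) (hb : 0 ≤ b) :
    IntervalIntegrable ρ MeasureTheory.volume a b :=
  (h.1.mono fun _ hx ↦ (le_min ha hb).trans hx.1).intervalIntegrable

theorem hasDerivAt (h : IsDickman ρ) (ht : 1 < t) : HasDerivAt ρ (-decay ρ t) t := by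
  rw [decay, ← neg_div]
  exact h.2.2.2 t ht

theorem hasDerivAt_id_mul (h : IsDickman ρ) (ht : 1 < t) :
    HasDerivAt (fun x ↦ x * ρ x) (ρ t - ρ (t - 1)) t := by
  convert! (hasDerivAt_id t).mul (h.hasDerivAt ht) using 1
  have : t ≠ 0 := by linarith
  simp only [id, decay]
  field_simp
  ring

theorem decay_pos (h : IsDickman ρ) (ht : 1 ≤ t) : 0 < decay ρ t :=
  div_pos (h.pos (by linarith)) (by linarith)

theorem antitoneOn (h : IsDickman ρ) : AntitoneOn ρ (Set.Ici 0) := by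
  have left : AntitoneOn ρ (Set.Icc 0 1) := fun x hx y hy _ ↦ by
    rw [h.eq_one hx.1 hx.2, h.eq_one hy.1 hy.2]
  have right : AntitoneOn ρ (Set.Ici 1) :=
    antitoneOn_of_hasDerivWithinAt_nonpos (convex_Ici 1) h.continuousOn_Ici_one
      (fun x hx ↦ (h.hasDerivAt (by simpa using hx)).hasDerivWithinAt)
      fun x hx ↦ neg_nonpos.2 (h.decay_pos (interior_subset hx)).le
  rw [← Set.Icc_union_Ici_eq_Ici zero_le_one]
  exact left.union_right right (isGreatest_Icc zero_le_one) isLeast_Ici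

theorem le_one (h : IsDickman ρ) (ht : 0 ≤ t) : ρ t ≤ 1 := by
  rw [← h.eq_one le_rfl zero_le_one]
  exact h.antitoneOn Set.self_mem_Ici ht ht

theorem decay_antitoneOn (h : IsDickman ρ) : AntitoneOn (decay ρ) (Set.Ici 1) := by
  intro x hx y hy hxy
  rw [Set.mem_Ici] at hx hy
  have : ρ (y - 1) ≤ ρ (x - 1) := h.antitoneOn (sub_nonneg.2 hx) (sub_nonneg.2 hy) (by linarith)
  have := h.pos (sub_nonneg.2 hy)
  unfold decay
  gcongr
  linarith

theorem sub_decay_mul_le (h : IsDickman ρ) (hx : 1 ≤ x) (hy : 1 ≤ y) :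
    ρ x + -decay ρ x * (y - x) ≤ ρ y :=
  add_mul_sub_le_of_hasDerivAt_of_monotoneOn (convex_Ici 1) h.continuousOn_Ici_one
    (fun _ ht ↦ h.hasDerivAt (by simpa using ht)) h.decay_antitoneOn.neg hx hy

theorem integral_eq_mul (h : IsDickman ρ) (hu : 1 ≤ u) : ∫ x in (u - 1)..u, ρ x = u * ρ u := by
  have ftc : ∫ x in (1 : ℝ)..u, (ρ x - ρ (x - 1)) = u * ρ u - 1 * ρ 1 := by
    have shift : ContinuousOn (fun x ↦ ρ (x - 1)) (Set.Icc 1 u) :=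
      h.1.comp (by fun_prop) fun x hx ↦ sub_nonneg.2 hx.1
    exact intervalIntegral.integral_eq_sub_of_hasDerivAt_of_le hu
      (continuousOn_id.mul (h.continuousOn_Icc zero_le_one))
      (fun x hx ↦ h.hasDerivAt_id_mul hx.1)
      (((h.continuousOn_Icc zero_le_one).sub shift).intervalIntegrable_of_Icc hu)
  have initial : ∫ x in (0 : ℝ)..1, ρ x = 1 := by
    rw [intervalIntegral.integral_congr (g := fun _ ↦ (1 : ℝ)) fun x hx ↦ by
      rw [Set.uIcc_of_le zero_le_one] at hx
      exact h.eq_one hx.1 hx.2]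
    simp
  have h0 : (0 : ℝ) ≤ u - 1 := by linarith
  have int (a b : ℝ) (ha : 0 ≤ a) (hb : 0 ≤ b) := h.intervalIntegrable ha hb
  rw [intervalIntegral.integral_sub (int 1 u zero_le_one (by linarith))
    (by simpa using (int 0 (u - 1) le_rfl h0).comp_sub_right 1),
    intervalIntegral.integral_comp_sub_right (fun x ↦ ρ x), sub_self, one_mul,
    h.eq_one zero_le_one le_rfl] at ftc
  have split₁ := intervalIntegral.integral_add_adjacent_intervals
    (int 0 1 le_rfl zero_le_one) (int 1 u zero_le_one (by linarith))
  have split₂ := intervalIntegral.integral_add_adjacent_intervals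
    (int 0 (u - 1) le_rfl h0) (int (u - 1) u h0 (by linarith))
  linarith

theorem logDecay_mul (h : IsDickman ρ) (hu : 0 ≤ u) : logDecay ρ u * ρ u = decay ρ u := by
  have := (h.pos hu).ne'
  unfold logDecay decay
  field_simp

theorem mul_logDecay (h : IsDickman ρ) (hu : 1 ≤ u) : u * logDecay ρ u = ρ (u - 1) / ρ u := by
  have := (h.pos (by linarith : 0 ≤ u)).ne'
  unfold logDecay
  field_simp

theorem logDecay_pos (h : IsDickman ρ) (hu : 1 ≤ u) : 0 < logDecay ρ u :=
  div_pos (h.pos (by linarith)) (mul_pos (by linarith) (h.pos (by linarith)))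

theorem logDecay_one (h : IsDickman ρ) : logDecay ρ 1 = 1 := by
  rw [logDecay, h.eq_one zero_le_one le_rfl, h.eq_one (by norm_num) (by norm_num)]
  norm_num

theorem continuousOn_logDecay (h : IsDickman ρ) : ContinuousOn (logDecay ρ) (Set.Ici 1) :=
  (h.1.comp (by fun_prop) fun _ hx ↦ sub_nonneg.2 hx).div
    (continuousOn_id.mul h.continuousOn_Ici_one) fun x hx ↦
      (mul_pos (zero_lt_one.trans_le hx) (h.pos (zero_le_one.trans hx))).ne'

theorem hasDerivAt_logDecay (h : IsDickman ρ) (hu : 2 < u) :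
    HasDerivAt (logDecay ρ) (logDecay ρ u * (logDecay ρ u - logDecay ρ (u - 1) - 1 / u)) u := by
  have hρ := (h.pos (by linarith : 0 ≤ u)).ne'
  have hρ' := (h.pos (by linarith : 0 ≤ u - 1)).ne'
  have hu0 : u ≠ 0 := by linarith
  have hu1 : u - 1 ≠ 0 := by linarith
  convert! ((h.hasDerivAt (by linarith : 1 < u - 1)).comp_sub_const u 1).div
    (h.hasDerivAt_id_mul (by linarith : 1 < u)) (mul_ne_zero hu0 hρ) using 1
  simp only [logDecay, decay]
  field_simp
  ring

theorem id_mul_antitoneOn (h : IsDickman ρ) : AntitoneOn (fun x ↦ x * ρ x) (Set.Ici 1) :=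
  antitoneOn_of_hasDerivWithinAt_nonpos (convex_Ici 1)
    (continuousOn_id.mul h.continuousOn_Ici_one)
    (fun x hx ↦ (h.hasDerivAt_id_mul (by simpa using hx)).hasDerivWithinAt)
    fun x hx ↦ by
      have hx : 1 ≤ x := interior_subset hx
      exact sub_nonpos.2 (h.antitoneOn (sub_nonneg.2 hx) (zero_le_one.trans hx) (by linarith))

theorem logDecay_monotoneOn_Icc (h : IsDickman ρ) (hT : 2 ≤ T)
    (gap : ∀ u ∈ Set.Ioo 2 T, 1 / u ≤ logDecay ρ u - logDecay ρ (u - 1)) :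
    MonotoneOn (logDecay ρ) (Set.Icc 1 T) := by
  have left : MonotoneOn (logDecay ρ) (Set.Icc 1 2) := fun x hx y hy hxy ↦ by
    rw [logDecay, logDecay, h.eq_one (t := x - 1) (by linarith [hx.1]) (by linarith [hx.2]),
      h.eq_one (t := y - 1) (by linarith [hy.1]) (by linarith [hy.2])]
    exact one_div_le_one_div_of_le (mul_pos (by linarith [hy.1]) (h.pos (by linarith [hy.1])))
      (h.id_mul_antitoneOn hx.1 hy.1 hxy)
  have right : MonotoneOn (logDecay ρ) (Set.Icc 2 T) := by
    refine monotoneOn_of_hasDerivWithinAt_nonneg (convex_Icc 2 T)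
      (f' := fun u ↦ logDecay ρ u * (logDecay ρ u - logDecay ρ (u - 1) - 1 / u))
      (h.continuousOn_logDecay.mono fun x hx ↦ one_le_two.trans hx.1)
      (fun x hx ↦ ?_) fun x hx ↦ ?_ <;> rw [interior_Icc] at hx
    · exact (h.hasDerivAt_logDecay hx.1).hasDerivWithinAt
    · exact mul_nonneg (h.logDecay_pos (by linarith [hx.1])).le (sub_nonneg.2 (gap x hx))
  rw [← Set.Icc_union_Icc_eq_Icc one_le_two hT]
  exact left.union_right right (isGreatest_Icc one_le_two) (isLeast_Icc hT)

theorem intervalIntegrable_decay (h : IsDickman ρ) (ha : 1 ≤ a) (hb : 1 ≤ b) :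
    IntervalIntegrable (decay ρ) MeasureTheory.volume a b :=
  (h.decay_antitoneOn.mono fun _ hx ↦ (le_min ha hb).trans hx.1).intervalIntegrable

theorem integral_decay (h : IsDickman ρ) (ha : 1 ≤ a) (hab : a ≤ b) :
    ∫ x in a..b, decay ρ x = ρ a - ρ b := by
  have ftc := intervalIntegral.integral_eq_sub_of_hasDerivAt_of_le hab
    (h.continuousOn_Icc (zero_le_one.trans ha)) (fun x hx ↦ h.hasDerivAt (ha.trans_lt hx.1))
    (h.intervalIntegrable_decay ha (ha.trans hab)).neg
  rw [intervalIntegral.integral_neg] at ftc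
  linarith

theorem integral_logDecay_sub_mul (h : IsDickman ρ) (hT : 2 ≤ T) :
    ∫ x in (T - 1)..T, (logDecay ρ T - logDecay ρ x) * ρ x = ρ T :=
  calc ∫ x in (T - 1)..T, (logDecay ρ T - logDecay ρ x) * ρ x
      = ∫ x in (T - 1)..T, (logDecay ρ T * ρ x - decay ρ x) := by
        refine intervalIntegral.integral_congr fun x hx ↦ ?_
        rw [Set.uIcc_of_le (by linarith)] at hx
        rw [← h.logDecay_mul (by linarith [hx.1]), sub_mul]
    _ = T * logDecay ρ T * ρ T - (ρ (T - 1) - ρ T) := by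
        rw [intervalIntegral.integral_sub
          ((h.intervalIntegrable (by linarith) (by linarith)).const_mul _)
          (h.intervalIntegrable_decay (by linarith) (by linarith)),
          intervalIntegral.integral_const_mul, h.integral_decay (by linarith) (by linarith),
          h.integral_eq_mul (by linarith)]
        ring
    _ = ρ T := by
        rw [h.mul_logDecay (by linarith), div_mul_cancel₀ _ (h.pos (by linarith)).ne',
          sub_sub_cancel]

theorem one_div_lt_logDecay_sub (h : IsDickman ρ) (hT : 2 ≤ T)
    (mono : MonotoneOn (logDecay ρ) (Set.Icc 1 T)) :
    1 / T < logDecay ρ T - logDecay ρ (T - 1) := by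
  by_contra! hle
  have hρT := h.pos (by linarith : 0 ≤ T)
  have continuousOn_ρ := h.continuousOn_Icc (by linarith : 0 ≤ T - 1) (b := T)
  have continuousOn_r : ContinuousOn (logDecay ρ) (Set.Icc (T - 1) T) :=
    h.continuousOn_logDecay.mono fun x hx ↦ Set.mem_Ici.2 (by linarith [hx.1])
  have strict : ∫ x in (T - 1)..T, (logDecay ρ T - logDecay ρ x) * ρ x <
      ∫ x in (T - 1)..T, 1 / T * ρ x := by
    refine intervalIntegral.integral_lt_integral_of_continuousOn_of_le_of_exists_lt (by linarith)
      ((continuousOn_const.sub continuousOn_r).mul continuousOn_ρ)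
      (continuousOn_const.mul continuousOn_ρ) (fun x hx ↦ ?_) ⟨T, ⟨by linarith, le_rfl⟩, ?_⟩
    · refine mul_le_mul_of_nonneg_right ?_ (h.pos (by linarith [hx.1])).le
      linarith [mono ⟨by linarith, by linarith⟩ ⟨by linarith [hx.1], hx.2⟩ hx.1.le]
    · rw [sub_self, zero_mul]
      positivity
  rw [h.integral_logDecay_sub_mul hT, intervalIntegral.integral_const_mul,
    h.integral_eq_mul (by linarith), one_div_mul_eq_div, mul_div_cancel_left₀ _ (by linarith)]
    at strict
  exact strict.false

theorem logDecay_monotoneOn (h : IsDickman ρ) : MonotoneOn (logDecay ρ) (Set.Ici 1) := by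
  have gap (u : ℝ) (hu : 2 ≤ u) : 0 < logDecay ρ u - logDecay ρ (u - 1) - 1 / u := by
    have hcont := h.continuousOn_logDecay
    have shift : ContinuousOn (fun u ↦ logDecay ρ (u - 1)) (Set.Ici 2) :=
      hcont.comp (by fun_prop) fun x hx ↦ by
        rw [Set.mem_Ici] at hx ⊢
        linarith
    have inv : ContinuousOn (fun u : ℝ ↦ 1 / u) (Set.Ici 2) :=
      continuousOn_const.div continuousOn_id fun x hx ↦ (two_pos.trans_le hx).ne'
    refine forall_pos_of_forall_lt_pos
      (((hcont.mono (Set.Ici_subset_Ici.2 one_le_two)).sub shift).sub inv)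
      (fun T hT below ↦ ?_) hu
    exact sub_pos.2 (h.one_div_lt_logDecay_sub hT (h.logDecay_monotoneOn_Icc hT fun u hu ↦
        (sub_pos.1 (below u ⟨hu.1.le, hu.2⟩)).le))
  intro x hx y hy hxy
  rw [Set.mem_Ici] at hx hy
  exact h.logDecay_monotoneOn_Icc (T := y + 1) (by linarith)
    (fun u hu ↦ (sub_pos.1 (gap u hu.1.le)).le) ⟨hx, by linarith⟩ ⟨hy, by linarith⟩ hxy

theorem one_le_logDecay (h : IsDickman ρ) (hu : 1 ≤ u) : 1 ≤ logDecay ρ u := by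
  rw [← h.logDecay_one]
  exact h.logDecay_monotoneOn Set.self_mem_Ici hu hu

theorem log_le_log_sub (h : IsDickman ρ) (hx : 1 ≤ x) (hy : 1 ≤ y) :
    log (ρ y) ≤ log (ρ x) - logDecay ρ x * (y - x) := by
  have := add_mul_sub_le_of_hasDerivAt_of_monotoneOn (f := fun t ↦ -log (ρ t)) (convex_Ici 1)
    (h.continuousOn_Ici_one.log fun t ht ↦ (h.pos (zero_le_one.trans ht)).ne').neg
    (fun t ht ↦ by
      rw [interior_Ici, Set.mem_Ioi] at ht
      have hρt := (h.pos (zero_le_one.trans ht.le)).ne'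
      convert! ((h.hasDerivAt ht).log hρt).neg using 1
      rw [← h.logDecay_mul (by linarith)]
      field_simp)
    h.logDecay_monotoneOn hx hy
  linarith

end IsDickman

section Xi

variable {u v x y : ℝ}

theorem exp_lt_one_add_mul_of_exp_le (hx : 0 < x) (hxy : x < y) (hy : exp y ≤ 1 + u * y) :
    exp x < 1 + u * x := by
  have slope_lt := strictConvexOn_exp.secant_strict_mono (Set.mem_univ 0) (Set.mem_univ x)
    (Set.mem_univ y) hx.ne' (hx.trans hxy).ne' hxy
  rw [exp_zero, sub_zero, sub_zero, div_lt_iff₀ hx] at slope_lt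
  have slope_le : (exp y - 1) / y ≤ u := by
    rw [div_le_iff₀ (hx.trans hxy)]
    linarith
  linarith [mul_le_mul_of_nonneg_right slope_le hx.le]

theorem exists_pos_exp_eq_one_add_mul (hu : 1 < u) : ∃ x : ℝ, 0 < x ∧ exp x = 1 + u * x := by
  have hlog := log_pos hu
  have left : exp (log u) ≤ 1 + u * log u := by
    have := mul_le_mul_of_nonneg_left (one_sub_inv_le_log_of_pos (zero_lt_one.trans hu))
      (zero_le_one.trans hu.le)
    rw [mul_sub, mul_inv_cancel₀ (by linarith)] at this
    rw [exp_log (by linarith)]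
    linarith
  have right : 1 + u * (2 * u + log u) ≤ exp (2 * u + log u) := by
    rw [exp_add, exp_log (by linarith)]
    nlinarith [quadratic_le_exp_of_nonneg (by linarith : 0 ≤ 2 * u),
      log_le_sub_one_of_pos (by linarith : 0 < u)]
  obtain ⟨x, hx, hx_zero⟩ := intermediate_value_Icc (by linarith : log u ≤ 2 * u + log u)
    (f := fun x ↦ exp x - (1 + u * x)) (by fun_prop)
    (show (0 : ℝ) ∈ Set.Icc _ _ from ⟨sub_nonpos.2 left, sub_nonneg.2 right⟩)
  exact ⟨x, hlog.trans_le hx.1, sub_eq_zero.1 hx_zero⟩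

theorem xi_of_le_one (hu : u ≤ 1) : xi u = 0 := by
  refine dif_neg ?_
  rintro ⟨x, hx, hexp⟩
  linarith [add_one_lt_exp hx.ne', mul_le_mul_of_nonneg_right hu hx.le]

theorem xi_pos (hu : 1 < u) : 0 < xi u := by
  rw [xi, dif_pos (exists_pos_exp_eq_one_add_mul hu)]
  exact (exists_pos_exp_eq_one_add_mul hu).choose_spec.1

theorem exp_xi (u : ℝ) : exp (xi u) = 1 + u * xi u := by
  rcases le_or_gt u 1 with hu | hu
  · simp [xi_of_le_one hu]
  · rw [xi, dif_pos (exists_pos_exp_eq_one_add_mul hu)]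
    exact (exists_pos_exp_eq_one_add_mul hu).choose_spec.2

theorem xi_nonneg (u : ℝ) : 0 ≤ xi u := by
  rcases le_or_gt u 1 with hu | hu
  · exact (xi_of_le_one hu).ge
  · exact (xi_pos hu).le

theorem le_xi (h : exp x ≤ 1 + u * x) : x ≤ xi u := by
  by_contra! hlt
  rcases le_or_gt u 1 with hu | hu
  · rw [xi_of_le_one hu] at hlt
    linarith [add_one_lt_exp hlt.ne', mul_le_mul_of_nonneg_right hu hlt.le]
  · exact (exp_lt_one_add_mul_of_exp_le (xi_pos hu) hlt h).ne (exp_xi u)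

theorem xi_le (hx : 0 < x) (h : 1 + u * x ≤ exp x) : xi u ≤ x := by
  by_contra! hlt
  exact (exp_lt_one_add_mul_of_exp_le hx hlt (exp_xi u).le).not_ge h

theorem monotone_xi : Monotone xi := fun u v huv ↦ le_xi <| by
  rw [exp_xi]
  gcongr
  exact xi_nonneg u

theorem sinh_xi_div_two (u : ℝ) : sinh (xi u / 2) = u * exp (-(xi u / 2)) * (xi u / 2) := by
  have halves : exp (xi u / 2) = exp (xi u) * exp (-(xi u / 2)) := by
    rw [← exp_add]
    ring_nf
  rw [sinh_eq, halves, exp_xi]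
  ring

theorem xi_le_two_mul_log (hu : 1 ≤ u) : xi u ≤ 2 * log u := by
  rcases hu.eq_or_lt with rfl | hu
  · simp [xi_of_le_one le_rfl]
  have hξ : 0 < xi u / 2 := half_pos (xi_pos hu)
  have h : 1 ≤ u * exp (-(xi u / 2)) := by
    refine le_of_mul_le_mul_right ?_ hξ
    rw [one_mul, ← sinh_xi_div_two]
    exact self_le_sinh_iff.2 hξ.le
  rw [exp_neg, ← div_eq_mul_inv, one_le_div (exp_pos _)] at h
  linarith [(le_log_iff_exp_le (by linarith)).2 h]

theorem monotoneOn_sinh_div_id : MonotoneOn (fun x ↦ sinh x / x) (Set.Ioi 0) := by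
  have convexOn_sinh : ConvexOn ℝ (Set.Ici 0) sinh := by
    refine MonotoneOn.convexOn_of_deriv (convex_Ici 0) continuous_sinh.continuousOn
      differentiable_sinh.differentiableOn ?_
    rw [Real.deriv_sinh, interior_Ici]
    intro x hx y hy hxy
    rw [cosh_le_cosh, abs_of_pos hx, abs_of_pos hy]
    exact hxy
  intro x hx y hy hxy
  rw [Set.mem_Ioi] at hx hy
  simpa using convexOn_sinh.secant_mono Set.self_mem_Ici hx.le hy.le hx.ne' hy.ne' hxy

-- By `sinh_xi_div_two`, `u ↦ log u - ξ(u) / 2` is the increasing function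
-- `y ↦ log (sinh y / y)` evaluated at `y = ξ(u) / 2`.
theorem xi_sub_xi_le (hu : 1 < u) (huv : u ≤ v) : xi v - xi u ≤ 2 * log (v / u) := by
  have hv : 1 < v := hu.trans_le huv
  have hξu := half_pos (xi_pos hu)
  have hξv := half_pos (xi_pos hv)
  have mono := monotoneOn_sinh_div_id hξu hξv (by linarith [monotone_xi huv])
  simp only [sinh_xi_div_two, mul_div_cancel_right₀ _ hξu.ne',
    mul_div_cancel_right₀ _ hξv.ne'] at mono
  have := log_le_log (by positivity) mono
  rw [log_mul (by linarith) (exp_pos _).ne', log_mul (by linarith) (exp_pos _).ne', log_exp,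
    log_exp] at this
  rw [log_div (by linarith) (by linarith)]
  linarith

theorem integral_exp_sub_mul (u : ℝ) {c : ℝ} (hc : c ≠ 0) :
    ∫ x in (u - 1)..u, exp ((u - x) * c) = (exp c - 1) / c := by
  rw [intervalIntegral.integral_comp_sub_left (fun x ↦ exp (x * c)),
    intervalIntegral.integral_comp_mul_right (fun x ↦ exp x) hc, integral_exp]
  simp [div_eq_inv_mul]

namespace IsDickman

variable {ρ : ℝ → ℝ}

theorem one_add_mul_logDecay_le_exp (h : IsDickman ρ) (hu : 2 ≤ u) :
    1 + u * logDecay ρ u ≤ exp (logDecay ρ u) := by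
  have hρ := h.pos (by linarith : 0 ≤ u)
  have hr := h.logDecay_pos (by linarith : 1 ≤ u)
  have bound : ∫ x in (u - 1)..u, ρ x ≤
      ∫ x in (u - 1)..u, ρ u * exp ((u - x) * logDecay ρ u) := by
    refine intervalIntegral.integral_mono_on (by linarith)
      (h.intervalIntegrable (by linarith) (by linarith))
      (Continuous.intervalIntegrable (by fun_prop) _ _) fun x hx ↦ ?_
    rw [← log_le_log_iff (h.pos (by linarith [hx.1])) (by positivity),
      log_mul hρ.ne' (exp_pos _).ne', log_exp]
    linarith [h.log_le_log_sub (by linarith : 1 ≤ u) (by linarith [hx.1] : 1 ≤ x)]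
  rw [h.integral_eq_mul (by linarith), intervalIntegral.integral_const_mul,
    integral_exp_sub_mul u hr.ne', mul_comm u, mul_le_mul_iff_right₀ hρ, le_div_iff₀ hr] at bound
  linarith

theorem xi_le_logDecay (h : IsDickman ρ) (hu : 2 ≤ u) : xi u ≤ logDecay ρ u :=
  xi_le (h.logDecay_pos (by linarith)) (h.one_add_mul_logDecay_le_exp hu)

theorem mul_exp_sub_mul_log_le (h : IsDickman ρ) (hu : 2 ≤ u) (hx : x ∈ Set.Icc (u - 1) u) :
    ρ u * exp ((u - x) * log (u * logDecay ρ u)) ≤ ρ x := by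
  have hρ := h.pos (by linarith : 0 ≤ u)
  have hρ' := h.pos (by linarith : 0 ≤ u - 1)
  rw [← log_le_log_iff (by positivity) (h.pos (by linarith [hx.1])), log_mul hρ.ne' (exp_pos _).ne',
    log_exp, h.mul_logDecay (by linarith), log_div hρ'.ne' hρ.ne']
  have at_left := mul_le_mul_of_nonneg_left
    (h.log_le_log_sub (by linarith [hx.1] : 1 ≤ x) (by linarith : 1 ≤ u - 1)) (sub_nonneg.2 hx.2)
  have at_right := mul_le_mul_of_nonneg_left
    (h.log_le_log_sub (by linarith [hx.1] : 1 ≤ x) (by linarith : 1 ≤ u)) (sub_nonneg.2 hx.1)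
  linarith

theorem mul_logDecay_le_one_add_mul_log (h : IsDickman ρ) (hu : 2 ≤ u) :
    u * logDecay ρ u ≤ 1 + u * log (u * logDecay ρ u) := by
  have hρ := h.pos (by linarith : 0 ≤ u)
  have hr : 1 < u * logDecay ρ u := by nlinarith [h.one_le_logDecay (by linarith : 1 ≤ u)]
  have bound : ∫ x in (u - 1)..u, ρ u * exp ((u - x) * log (u * logDecay ρ u)) ≤
      ∫ x in (u - 1)..u, ρ x :=
    intervalIntegral.integral_mono_on (by linarith)
      (Continuous.intervalIntegrable (by fun_prop) _ _)
      (h.intervalIntegrable (by linarith) (by linarith)) fun x hx ↦ h.mul_exp_sub_mul_log_le hu hx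
  rw [h.integral_eq_mul (by linarith), intervalIntegral.integral_const_mul,
    integral_exp_sub_mul u (log_pos hr).ne', mul_comm u (ρ u), mul_le_mul_iff_right₀ hρ,
    div_le_iff₀ (log_pos hr), exp_log (by linarith)] at bound
  linarith

theorem mul_logDecay_le (h : IsDickman ρ) (hu : 2 ≤ u) : u * logDecay ρ u ≤ 1 + u * xi u := by
  have hr : 0 < u * logDecay ρ u := mul_pos (by linarith) (h.logDecay_pos (by linarith))
  have : log (u * logDecay ρ u) ≤ xi u := le_xi <| by
    rw [exp_log hr]
    exact h.mul_logDecay_le_one_add_mul_log hu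
  rwa [← exp_xi, ← log_le_iff_le_exp hr]

end IsDickman

end Xi

section FriableModel

/-- The point `(n + 1/2) / (m + 1/2)`, at which `ρ` models the probability `p_{n,m}`; see
`friableModel`. -/
noncomputable def modelPoint (m n : ℕ) : ℝ := (2 * n + 1) / (2 * m + 1)

/-- The model `ρ((n + 1/2) / (m + 1/2))` of the probability `p_{n,m}`. The shifts by `1/2` are
chosen so that the integral equation `u ρ(u) = ∫_{u-1}^u ρ` becomes the recurrence of `p_{n,m}` up
to the error of the midpoint rule. -/
noncomputable def friableModel (ρ : ℝ → ℝ) (m n : ℕ) : ℝ := ρ (modelPoint m n)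

variable {ρ : ℝ → ℝ} {m n : ℕ} {c u δ : ℝ}

theorem modelPoint_nonneg (m n : ℕ) : 0 ≤ modelPoint m n := by
  unfold modelPoint
  positivity

theorem monotone_modelPoint (m : ℕ) : Monotone (modelPoint m) := fun k n hkn ↦ by
  unfold modelPoint
  gcongr

theorem modelPoint_mul (m n : ℕ) : modelPoint m n * (2 * m + 1) = 2 * n + 1 :=
  div_mul_cancel₀ _ (by positivity)

theorem one_le_modelPoint (hmn : m ≤ n) : 1 ≤ modelPoint m n := by
  rw [modelPoint, one_le_div (by positivity)]
  gcongr

theorem three_le_modelPoint (hn : 3 * m + 1 ≤ n) : 3 ≤ modelPoint m n := by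
  rw [modelPoint, le_div_iff₀ (by positivity)]
  have : (3 * m + 1 : ℝ) ≤ n := mod_cast hn
  linarith

theorem modelPoint_sub {j : ℕ} (hj : j ≤ n) :
    modelPoint m (n - j) = modelPoint m n - 2 * (1 / (2 * m + 1)) * j := by
  rw [modelPoint, modelPoint, Nat.cast_sub hj]
  ring

theorem modelPoint_le_div_add_one (hm : 1 ≤ m) : modelPoint m n ≤ n / m + 1 := by
  have : (1 : ℝ) ≤ m := mod_cast hm
  rw [modelPoint, div_add_one (by positivity), div_le_div_iff₀ (by positivity) (by positivity)]
  nlinarith [n.cast_nonneg (α := ℝ)]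

namespace IsDickman

theorem friableModel_pos (h : IsDickman ρ) (m n : ℕ) : 0 < friableModel ρ m n :=
  h.pos (modelPoint_nonneg m n)

theorem antitone_friableModel (h : IsDickman ρ) (m : ℕ) : Antitone (friableModel ρ m) :=
  fun k n hkn ↦ h.antitoneOn (modelPoint_nonneg m k) (modelPoint_nonneg m n)
    (monotone_modelPoint m hkn)

theorem friableModel_of_le (h : IsDickman ρ) (hnm : n ≤ m) : friableModel ρ m n = 1 :=
  h.eq_one (modelPoint_nonneg m n) <| by
    rw [modelPoint, div_le_one (by positivity)]
    gcongr

theorem midpointError_modelPoint (h : IsDickman ρ) (hmn : m ≤ n) :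
    midpointError ρ (modelPoint m n) (1 / (2 * m + 1)) m = 2 * (1 / (2 * m + 1)) *
      (n * friableModel ρ m n - ∑ j ∈ Finset.Icc 1 m, friableModel ρ m (n - j)) := by
  have width : (2 * m + 1) * (1 / (2 * m + 1) : ℝ) = 1 := mul_one_div_cancel (by positivity)
  have sum_eq : ∑ j ∈ Finset.Icc 1 m, friableModel ρ m (n - j) =
      ∑ j ∈ Finset.Icc 1 m, ρ (modelPoint m n - 2 * (1 / (2 * m + 1)) * j) :=
    Finset.sum_congr rfl fun j hj ↦ by
      rw [friableModel, modelPoint_sub ((Finset.mem_Icc.1 hj).2.trans hmn)]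
  rw [midpointError, width, h.integral_eq_mul (one_le_modelPoint hmn), sum_eq, friableModel]
  have point : modelPoint m n = (2 * n + 1) * (1 / (2 * m + 1)) := by
    rw [modelPoint, mul_one_div]
  linear_combination ρ (modelPoint m n) * point

theorem abs_mul_friableModel_sub_sum_le (h : IsDickman ρ) (hmn : m ≤ n) :
    |n * friableModel ρ m n - ∑ j ∈ Finset.Icc 1 m, friableModel ρ m (n - j)| ≤ 1 / 2 := by
  have hU := one_le_modelPoint hmn
  have width : (2 * m + 1) * (1 / (2 * m + 1) : ℝ) = 1 := mul_one_div_cancel (by positivity)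
  have error := abs_midpointError_le_of_antitoneOn (f := ρ) (x := modelPoint m n)
    (h := 1 / (2 * m + 1)) (k := m) (by positivity) <| h.antitoneOn.mono fun x hx ↦ by
      rw [width] at hx
      exact Set.mem_Ici.2 (by linarith [hx.1])
  rw [h.midpointError_modelPoint hmn, abs_mul, abs_of_pos (by positivity), width] at error
  have hh : (0 : ℝ) < 1 / (2 * m + 1) := by positivity
  refine le_of_mul_le_mul_left ?_ (mul_pos two_pos hh)
  nlinarith [h.le_one (by linarith : 0 ≤ modelPoint m n - 1), h.pos (modelPoint_nonneg m n)]

theorem mul_friableModel_sub_sum_mem_Icc (h : IsDickman ρ) (hU : 2 ≤ modelPoint m n)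
    (hmn : m ≤ n) :
    n * friableModel ρ m n - ∑ j ∈ Finset.Icc 1 m, friableModel ρ m (n - j) ∈
      Set.Icc 0 (1 / (2 * m + 1) / 4 * decay ρ (modelPoint m n - 1)) := by
  have width : (2 * m + 1) * (1 / (2 * m + 1) : ℝ) = 1 := mul_one_div_cancel (by positivity)
  have hh : (0 : ℝ) < 1 / (2 * m + 1) := by positivity
  have one_le : ∀ x ∈ Set.Icc (modelPoint m n - 1) (modelPoint m n), 1 ≤ x :=
    fun x hx ↦ by linarith [hx.1]
  have error := midpointError_mem_Icc_of_subgradient (f := ρ) (f' := fun x ↦ -decay ρ x)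
    (x := modelPoint m n) (h := 1 / (2 * m + 1)) (k := m) hh.le
    (by rw [width]; exact h.continuousOn_Icc (by linarith))
    (by rw [width]; exact fun y hy z hz ↦ h.sub_decay_mul_le (one_le y hy) (one_le z hz))
    (neg_nonpos.2 (h.decay_pos (by linarith)).le)
  rw [h.midpointError_modelPoint hmn, width, neg_neg] at error
  refine ⟨le_of_mul_le_mul_left ?_ (mul_pos two_pos hh),
    le_of_mul_le_mul_left ?_ (mul_pos two_pos hh)⟩
  · linarith [error.1]
  · linarith [error.2]

theorem apply_sub_one_le (h : IsDickman ρ) (hu : 2 ≤ u) : ρ (u - 1) ≤ 3 * (u * log u) * ρ u := by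
  have hρ := h.pos (by linarith : 0 ≤ u)
  rw [← div_le_iff₀ hρ, ← h.mul_logDecay (by linarith)]
  have one_le : 1 ≤ u * log u := by
    nlinarith [log_two_gt_d9, log_le_log two_pos hu]
  have := mul_le_mul_of_nonneg_left (xi_le_two_mul_log (by linarith : 1 ≤ u))
    (by linarith : 0 ≤ u)
  linarith [h.mul_logDecay_le hu]

theorem decay_sub_one_le (h : IsDickman ρ) (hu : 3 ≤ u) :
    decay ρ (u - 1) ≤ 9 * u * log u ^ 2 * ρ u := by
  have hlog : 0 ≤ log (u - 1) := log_nonneg (by linarith)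
  have hlog_le : log (u - 1) ≤ log u := log_le_log (by linarith) (by linarith)
  have hρ := h.pos (by linarith : 0 ≤ u - 1)
  calc decay ρ (u - 1)
      ≤ 3 * log (u - 1) * ρ (u - 1) := by
        rw [decay, div_le_iff₀ (by linarith)]
        linarith [h.apply_sub_one_le (by linarith : 2 ≤ u - 1)]
    _ ≤ 3 * log u * (3 * (u * log u) * ρ u) :=
        mul_le_mul (by linarith) (h.apply_sub_one_le (by linarith)) hρ.le (by linarith)
    _ = _ := by ring

theorem mul_friableModel_sub_sum_le (h : IsDickman ρ) (hm : 1 ≤ m) (hmn : m ≤ n)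
    (hU : 3 ≤ modelPoint m n) :
    n * friableModel ρ m n - ∑ j ∈ Finset.Icc 1 m, friableModel ρ m (n - j) ≤
      2 * (log (modelPoint m n) / m) ^ 2 * (n * friableModel ρ m n) := by
  have hm' : (1 : ℝ) ≤ m := mod_cast hm
  have hn' : (m : ℝ) ≤ n := mod_cast hmn
  have hF := h.friableModel_pos m n
  have scale : 9 / 4 * (1 / (2 * m + 1) * modelPoint m n) ≤ 2 * n / m ^ 2 := by
    rw [modelPoint, div_mul_div_comm, ← mul_div_assoc, div_le_div_iff₀ (by positivity)
      (by positivity)]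
    nlinarith [mul_nonneg (n.cast_nonneg (α := ℝ)) (sq_nonneg (m : ℝ))]
  calc n * friableModel ρ m n - ∑ j ∈ Finset.Icc 1 m, friableModel ρ m (n - j)
      ≤ 1 / (2 * m + 1) / 4 * decay ρ (modelPoint m n - 1) :=
        (h.mul_friableModel_sub_sum_mem_Icc (by linarith) hmn).2
    _ ≤ 1 / (2 * m + 1) / 4 *
          (9 * modelPoint m n * log (modelPoint m n) ^ 2 * friableModel ρ m n) := by
        gcongr
        exact h.decay_sub_one_le hU
    _ = 9 / 4 * (1 / (2 * m + 1) * modelPoint m n) *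
          (log (modelPoint m n) ^ 2 * friableModel ρ m n) := by ring
    _ ≤ 2 * n / m ^ 2 * (log (modelPoint m n) ^ 2 * friableModel ρ m n) := by gcongr
    _ = _ := by ring

theorem abs_permProb_sub_friableModel_le_div (h : IsDickman ρ) (hm : 1 ≤ m) (n : ℕ) :
    |permProb n m - friableModel ρ m n| ≤ n / (m : ℝ) ^ 2 := by
  have : (0 : ℝ) < m := mod_cast hm
  have source (k : ℕ) (hk : m < k) :
      ∑ j ∈ Finset.Icc 1 m, ((k - j : ℕ) / (m : ℝ) ^ 2) + 1 / 2 ≤ k * (k / (m : ℝ) ^ 2) := by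
    rw [← Finset.sum_div, div_add' _ _ _ (by positivity), ← mul_div_assoc]
    gcongr
    linarith [sum_Icc_natCast_sub_add_le hk.le]
  have error (k : ℕ) (hk : m < k) := abs_le.1 (h.abs_mul_friableModel_sub_sum_le hk.le)
  have initial (k : ℕ) (hk : k ≤ m) : permProb k m = friableModel ρ m k := by
    rw [permProb_of_le hk, h.friableModel_of_le hk]
  rw [abs_sub_le_iff, sub_le_iff_le_add, sub_le_comm]
  constructor
  · refine le_of_delayed_sum_le (a := fun k ↦ permProb k m)
      (b := fun k ↦ k / (m : ℝ) ^ 2 + friableModel ρ m k) (N := m) (m := m)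
      (fun k hk ↦ ?_) fun k hk _ ↦ ?_
    · rw [initial k hk]
      exact le_add_of_nonneg_left (by positivity)
    · rw [natCast_mul_permProb hm hk.le, Finset.sum_add_distrib]
      linarith [source k hk, (error k hk).1]
  · refine le_of_delayed_sum_le (a := fun k ↦ friableModel ρ m k - k / (m : ℝ) ^ 2)
      (b := fun k ↦ permProb k m) (N := m) (m := m) (fun k hk ↦ ?_) fun k hk _ ↦ ?_
    · rw [initial k hk]
      exact sub_le_self _ (by positivity)
    · rw [natCast_mul_permProb hm hk.le, Finset.sum_sub_distrib]
      linarith [source k hk, (error k hk).2]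

theorem logDecay_three_le (h : IsDickman ρ) : logDecay ρ 3 ≤ 3 := by
  linarith [h.mul_logDecay_le (by norm_num : (2 : ℝ) ≤ 3),
    xi_le_two_mul_log (by norm_num : (1 : ℝ) ≤ 3), log_three_lt_d9]

theorem exp_neg_six_le (h : IsDickman ρ) : exp (-6) ≤ ρ 3 := by
  rw [← le_log_iff_exp_le (h.pos (by norm_num))]
  have := h.log_le_log_sub (by norm_num : (1 : ℝ) ≤ 3) le_rfl
  rw [h.eq_one zero_le_one le_rfl, log_one] at this
  linarith [h.logDecay_three_le]

theorem abs_permProb_sub_friableModel_le (h : IsDickman ρ) (hm : 1 ≤ m) (hn : n ≤ 3 * m + 1) :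
    |permProb n m - friableModel ρ m n| ≤ 4 * exp 6 / m * friableModel ρ m n := by
  have hm' : (1 : ℝ) ≤ m := mod_cast hm
  have hn' : (n : ℝ) ≤ 3 * m + 1 := mod_cast hn
  have model_ge : exp (-6) ≤ friableModel ρ m n := by
    refine h.exp_neg_six_le.trans (h.antitoneOn (modelPoint_nonneg m n) (by simp) ?_)
    rw [modelPoint, div_le_iff₀ (by positivity)]
    linarith
  calc |permProb n m - friableModel ρ m n|
      ≤ n / (m : ℝ) ^ 2 := h.abs_permProb_sub_friableModel_le_div hm n
    _ ≤ 4 / m := by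
        rw [div_le_div_iff₀ (by positivity) (by positivity)]
        nlinarith
    _ = 4 * exp 6 / m * exp (-6) := by
        rw [exp_neg]
        field_simp
    _ ≤ 4 * exp 6 / m * friableModel ρ m n := by gcongr

theorem permProb_le_mul_friableModel (h : IsDickman ρ) (hm : 1 ≤ m) (hc : 0 ≤ c)
    (initial : ∀ k ≤ 3 * m + 1, permProb k m ≤ c * friableModel ρ m k) (n : ℕ) :
    permProb n m ≤ c * friableModel ρ m n :=
  le_of_delayed_sum_le (a := fun k ↦ permProb k m) (b := fun k ↦ c * friableModel ρ m k) initial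
    fun k hk _ ↦ by
      have super := (h.mul_friableModel_sub_sum_mem_Icc (m := m) (n := k)
        (by linarith [three_le_modelPoint hk.le]) (by omega)).1
      rw [natCast_mul_permProb hm (by omega), ← Finset.mul_sum]
      linarith [mul_nonneg hc super]

-- The factor `exp (-(4 * δ / m * n))` turns the approximate solution into a subsolution: over a
-- delay `j`, which is `m / 2` on average, it changes by `exp (4 * δ / m * j)`, which makes up for
-- the relative defect `δ`.
theorem mul_friableModel_mul_exp_le_permProb (h : IsDickman ρ) (hm : 1 ≤ m) (hc : 0 ≤ c)
    (hδ : 0 ≤ δ) (hδ2 : δ ≤ 1 / 2)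
    (initial : ∀ k ≤ 3 * m + 1, c * friableModel ρ m k ≤ permProb k m)
    (defect : ∀ k, 3 * m + 1 < k → k ≤ n →
      (1 - δ) * (k * friableModel ρ m k) ≤ ∑ j ∈ Finset.Icc 1 m, friableModel ρ m (k - j)) :
    c * friableModel ρ m n * exp (-(4 * δ / m * n)) ≤ permProb n m := by
  set ε := 4 * δ / m
  have F_pos := h.friableModel_pos m
  refine le_of_delayed_sum_le (a := fun k ↦ c * friableModel ρ m k * exp (-(ε * k)))
    (b := fun k ↦ permProb k m) (N := 3 * m + 1) (m := m) (fun k hk ↦ ?_) fun k hk hkn ↦ ?_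
  · refine (mul_le_of_le_one_right (mul_nonneg hc (F_pos k).le) (exp_le_one_iff.2 ?_)).trans
      (initial k hk)
    exact neg_nonpos.2 (by positivity)
  have sub : k * friableModel ρ m k ≤
      ∑ j ∈ Finset.Icc 1 m, friableModel ρ m (k - j) * exp (ε * j) :=
    le_sum_mul_exp_of_one_sub_mul_le hm hδ hδ2 (mul_nonneg k.cast_nonneg (F_pos k).le)
      (fun i _ j _ hij ↦ h.antitone_friableModel m (Nat.sub_le_sub_left hij k))
      (fun j _ ↦ (F_pos _).le) (defect k hk hkn)
  have shift : ∑ j ∈ Finset.Icc 1 m, c * friableModel ρ m (k - j) * exp (-(ε * (k - j : ℕ))) =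
      c * exp (-(ε * k)) * ∑ j ∈ Finset.Icc 1 m, friableModel ρ m (k - j) * exp (ε * j) := by
    rw [Finset.mul_sum]
    refine Finset.sum_congr rfl fun j hj ↦ ?_
    have hj := Finset.mem_Icc.1 hj
    rw [Nat.cast_sub (by omega), show -(ε * (k - j)) = -(ε * k) + ε * j by ring, exp_add]
    ring
  rw [natCast_mul_permProb hm (by omega), shift]
  linarith [mul_le_mul_of_nonneg_left sub (by positivity : 0 ≤ c * exp (-(ε * k)))]

end IsDickman

end FriableModel

section RelativeError

variable {ρ : ℝ → ℝ} {m n : ℕ} {A T : ℝ}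

theorem half_le_log_div_add_one (hm : 1 ≤ m) (hmn : m ≤ n) : 1 / 2 ≤ log (n / m + 1) := by
  have : (1 : ℝ) ≤ n / m := (one_le_div (mod_cast hm)).2 (mod_cast hmn)
  have : log 2 ≤ log (n / m + 1) := log_le_log two_pos (by linarith)
  linarith [log_two_gt_d9]

theorem one_div_le_two_mul_log_div (hm : 1 ≤ m) (hmn : m ≤ n) :
    (1 / m : ℝ) ≤ 2 * (log (n / m + 1) / m) := by
  rw [← mul_div_assoc]
  gcongr
  linarith [half_le_log_div_add_one hm hmn]

theorem div_sub_modelPoint (hm : 1 ≤ m) : n / m - modelPoint m n = (n / m - 1) / (2 * m + 1) := by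
  have : (0 : ℝ) < m := mod_cast hm
  unfold modelPoint
  field_simp
  ring

theorem div_sub_modelPoint_nonneg (hm : 1 ≤ m) (hmn : m ≤ n) : 0 ≤ n / m - modelPoint m n := by
  rw [div_sub_modelPoint hm]
  exact div_nonneg (sub_nonneg.2 ((one_le_div (mod_cast hm)).2 (mod_cast hmn))) (by positivity)

theorem div_sub_modelPoint_le (hm : 1 ≤ m) : n / m - modelPoint m n ≤ n / m / (2 * m) := by
  have : (0 : ℝ) < m := mod_cast hm
  rw [div_sub_modelPoint hm]
  gcongr <;> linarith

theorem sub_le_div_sub_modelPoint (hm : 1 ≤ m) :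
    n / m / (2 * m) - (n / m / m + 2) / (4 * m) ≤ n / m - modelPoint m n := by
  have : (0 : ℝ) < m := mod_cast hm
  rw [div_sub_modelPoint hm, sub_le_comm]
  have gap : (n / m / (2 * m) - (n / m - 1) / (2 * m + 1) : ℝ) =
      (n / m / m + 2) / (2 * (2 * m + 1)) := by
    field_simp
    ring
  rw [gap]
  exact div_le_div_of_nonneg_left (by positivity) (by positivity) (by linarith)

theorem div_div_modelPoint_le (hm : 1 ≤ m) : n / m / modelPoint m n ≤ 1 + 1 / (2 * m) := by
  have hm0 : (0 : ℝ) < m := mod_cast hm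
  rw [modelPoint, div_div_eq_mul_div, div_mul_eq_mul_div, div_div, div_le_iff₀ (by positivity)]
  have : (1 + 1 / (2 * m)) * (m * (2 * n + 1)) = (2 * m + 1) * (2 * n + 1 : ℝ) / 2 := by
    field_simp
  rw [this]
  linarith

namespace IsDickman

theorem one_sub_mul_friableModel_le_sum (h : IsDickman ρ) (hm : 1 ≤ m) {k : ℕ}
    (hk : 3 * m + 1 ≤ k) (hkn : k ≤ n) :
    (1 - 2 * (log (n / m + 1) / m) ^ 2) * (k * friableModel ρ m k) ≤
      ∑ j ∈ Finset.Icc 1 m, friableModel ρ m (k - j) := by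
  have hU := three_le_modelPoint hk
  have hF := h.friableModel_pos m k
  have log_nonneg : 0 ≤ log (modelPoint m k) := log_nonneg (by linarith)
  have log_mono : log (modelPoint m k) ≤ log (n / m + 1) :=
    log_le_log (by linarith) ((monotone_modelPoint m hkn).trans (modelPoint_le_div_add_one hm))
  have : 2 * (log (modelPoint m k) / m) ^ 2 * (k * friableModel ρ m k) ≤
      2 * (log (n / m + 1) / m) ^ 2 * (k * friableModel ρ m k) := by gcongr
  linarith [h.mul_friableModel_sub_sum_le hm (by omega : m ≤ k) hU]

theorem permProb_div_friableModel_le (h : IsDickman ρ) (hm : 1 ≤ m) (n : ℕ) :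
    permProb n m / friableModel ρ m n ≤ 1 + 4 * exp 6 / m := by
  rw [div_le_iff₀ (h.friableModel_pos m n)]
  refine h.permProb_le_mul_friableModel hm (by positivity) (fun k hk ↦ ?_) n
  linarith [(abs_le.1 (h.abs_permProb_sub_friableModel_le hm hk)).2]

theorem le_permProb_div_friableModel (h : IsDickman ρ) (hm : 1 ≤ m)
    (hB : log (n / m + 1) / m ≤ 1 / 2) :
    max 0 (1 - 4 * exp 6 / m) * exp (-(4 * (2 * (log (n / m + 1) / m) ^ 2) / m * n)) ≤
      permProb n m / friableModel ρ m n := by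
  have hB0 : 0 ≤ log (n / m + 1) / m :=
    div_nonneg (log_nonneg (le_add_of_nonneg_left (by positivity))) (by positivity)
  rw [le_div_iff₀ (h.friableModel_pos m n), mul_right_comm]
  refine h.mul_friableModel_mul_exp_le_permProb hm (le_max_left _ _) (by positivity) (by nlinarith)
    (fun k hk ↦ ?_) fun k hk hkn ↦ h.one_sub_mul_friableModel_le_sum hm hk.le hkn
  rw [max_mul_of_nonneg _ _ (h.friableModel_pos m k).le, zero_mul]
  refine max_le (permProb_nonneg k m) ?_
  linarith [(abs_le.1 (h.abs_permProb_sub_friableModel_le hm hk)).1]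

theorem abs_permProb_div_friableModel_sub_one_le (h : IsDickman ρ) (hm : 1 ≤ m) (hmn : m ≤ n) :
    |permProb n m / friableModel ρ m n - 1| ≤
      (8 * exp 6 + 2 + 8 * (n / m * (log (n / m + 1) / m))) * (log (n / m + 1) / m) := by
  have hm0 : (0 : ℝ) < m := mod_cast hm
  have one_div_le := one_div_le_two_mul_log_div hm hmn
  set B := log (n / m + 1) / m with hB
  have hB0 : 0 < B := by linarith [one_div_pos.2 hm0]
  have K_le : 4 * exp 6 / m ≤ 8 * exp 6 * B := by
    rw [← mul_one_div]
    linarith [mul_le_mul_of_nonneg_left one_div_le (by positivity : 0 ≤ 4 * exp 6)]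
  have exp_pos := exp_pos 6
  have quad_nonneg : 0 ≤ 8 * (n / m * B) * B := by positivity
  have upper := h.permProb_div_friableModel_le hm n
  suffices lower : 1 - (8 * exp 6 + 2 + 8 * (n / m * B)) * B ≤
      permProb n m / friableModel ρ m n from abs_le.2 ⟨by linarith, by linarith⟩
  rcases le_or_gt B (1 / 2) with hB2 | hB2
  · have exponent : 4 * (2 * B ^ 2) / m * n = 8 * (n / m * B) * B := by ring
    have lower := h.le_permProb_div_friableModel hm (hB ▸ hB2)
    rw [← hB, exponent] at lower
    set c := max 0 (1 - 4 * exp 6 / m)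
    have hc : c ≤ 1 := max_le zero_le_one (sub_le_self _ (by positivity))
    have : c * (1 - 8 * (n / m * B) * B) ≤ c * exp (-(8 * (n / m * B) * B)) :=
      mul_le_mul_of_nonneg_left (one_sub_le_exp_neg _) (le_max_left _ _)
    linarith [le_max_right 0 (1 - 4 * exp 6 / m), mul_le_mul_of_nonneg_right hc quad_nonneg]
  · have := div_nonneg (permProb_nonneg n m) (h.friableModel_pos m n).le
    linarith [mul_pos exp_pos hB0]

theorem log_friableModel_sub_log_mem_Icc (h : IsDickman ρ) (hm : 1 ≤ m) (hmn : m ≤ n) :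
    log (friableModel ρ m n) - log (ρ (n / m)) ∈
      Set.Icc ((n / m - modelPoint m n) * logDecay ρ (modelPoint m n))
        ((n / m - modelPoint m n) * logDecay ρ (n / m)) := by
  have hU := one_le_modelPoint hmn
  have hu : (1 : ℝ) ≤ n / m := (one_le_div (mod_cast hm)).2 (mod_cast hmn)
  rw [friableModel]
  constructor
  · linarith [h.log_le_log_sub hU hu]
  · linarith [h.log_le_log_sub hu hU]

theorem xi_sub_one_div_le_logDecay (h : IsDickman ρ) (hm : 1 ≤ m) (hmn : m ≤ n)
    (hU : 2 ≤ modelPoint m n) : xi (n / m) - 1 / m ≤ logDecay ρ (modelPoint m n) := by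
  have hUu := sub_nonneg.1 (div_sub_modelPoint_nonneg hm hmn)
  have log_le : log (n / m / modelPoint m n) ≤ 1 / (2 * m) :=
    (log_le_sub_one_of_pos (div_pos (by linarith) (by linarith))).trans
      (by linarith [div_div_modelPoint_le (n := n) hm])
  have half : (1 / (2 * m) : ℝ) = 1 / m / 2 := by ring
  linarith [xi_sub_xi_le (by linarith : 1 < modelPoint m n) hUu, h.xi_le_logDecay hU]

theorem sub_modelPoint_mul_logDecay_le (h : IsDickman ρ) (hm : 1 ≤ m) (hu : (2 : ℝ) ≤ n / m) :
    (n / m - modelPoint m n) * logDecay ρ (n / m) ≤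
      n / m * xi (n / m) / (2 * m) + 1 / m / 2 := by
  have r_le := h.mul_logDecay_le hu
  have r_pos := h.logDecay_pos (by linarith : (1 : ℝ) ≤ n / m)
  calc (n / m - modelPoint m n) * logDecay ρ (n / m)
      ≤ n / m / (2 * m) * logDecay ρ (n / m) := by
        gcongr
        exact div_sub_modelPoint_le hm
    _ = n / m * logDecay ρ (n / m) / (2 * m) := by ring
    _ ≤ (1 + n / m * xi (n / m)) / (2 * m) := by gcongr
    _ = n / m * xi (n / m) / (2 * m) + 1 / m / 2 := by ring

theorem le_sub_modelPoint_mul_logDecay (h : IsDickman ρ) (hm : 1 ≤ m) (hmn : m ≤ n)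
    (hU : 2 ≤ modelPoint m n) :
    n / m * xi (n / m) / (2 * m) -
        (1 + 3 * (n / m * (log (n / m + 1) / m))) * (log (n / m + 1) / m) ≤
      (n / m - modelPoint m n) * logDecay ρ (modelPoint m n) := by
  have hm0 : (0 : ℝ) < m := mod_cast hm
  have w_le := one_div_le_two_mul_log_div hm hmn
  have d_nonneg := div_sub_modelPoint_nonneg hm hmn
  have d_le := div_sub_modelPoint_le (n := n) hm
  have le_d := sub_le_div_sub_modelPoint (n := n) hm
  have le_r := mul_le_mul_of_nonneg_left (h.xi_sub_one_div_le_logDecay hm hmn hU) d_nonneg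
  have hu : (2 : ℝ) ≤ n / m := by linarith
  have ξ_nonneg := xi_nonneg (n / m)
  have ξ_le : xi (n / m) ≤ 2 * (m * (log (n / m + 1) / m)) := by
    rw [mul_div_cancel₀ _ hm0.ne']
    linarith [xi_le_two_mul_log (by linarith : (1 : ℝ) ≤ n / m),
      log_le_log (by linarith : (0 : ℝ) < n / m) (by linarith : (n / m : ℝ) ≤ n / m + 1)]
  set u : ℝ := n / m
  set B := log (u + 1) / m
  have hB : 0 < B := by linarith [one_div_pos.2 hm0]
  have main := mul_le_mul_of_nonneg_right le_d ξ_nonneg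
  have shift := calc (u / m + 2) / (4 * m) * xi u
      ≤ (u / m + 2) / (4 * m) * (2 * (m * B)) := by gcongr
    _ = (u * (1 / m) / 2 + 1) * B := by field_simp; ring
    _ ≤ (u * (2 * B) / 2 + 1) * B := by gcongr
  have correction := calc (u - modelPoint m n) * (1 / m)
      ≤ u / (2 * m) * (1 / m) := by gcongr
    _ = u * (1 / m) * (1 / m) / 2 := by ring
    _ ≤ u * (2 * B) * (2 * B) / 2 := by gcongr
  have : u * xi u / (2 * m) = u / (2 * m) * xi u := by ring
  linarith

theorem abs_log_friableModel_sub_le_of_two_le (h : IsDickman ρ) (hm : 1 ≤ m) (hmn : m ≤ n)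
    (hU : 2 ≤ modelPoint m n) :
    |log (friableModel ρ m n) - log (ρ (n / m)) - n / m * xi (n / m) / (2 * m)| ≤
      (1 + 3 * (n / m * (log (n / m + 1) / m))) * (log (n / m + 1) / m) := by
  obtain ⟨lower, upper⟩ := h.log_friableModel_sub_log_mem_Icc hm hmn
  have hu : (2 : ℝ) ≤ n / m := by linarith [div_sub_modelPoint_nonneg hm hmn]
  have w_le := one_div_le_two_mul_log_div hm hmn
  have : 0 ≤ log (n / m + 1) := log_nonneg (by linarith)
  have : 0 ≤ 3 * (n / m * (log (n / m + 1) / m)) * (log (n / m + 1) / m) := by positivity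
  rw [abs_le]
  constructor
  · linarith [h.le_sub_modelPoint_mul_logDecay hm hmn hU]
  · linarith [h.sub_modelPoint_mul_logDecay_le hm hu]

theorem abs_log_friableModel_sub_le_of_lt_two (h : IsDickman ρ) (hm : 1 ≤ m) (hmn : m ≤ n)
    (hU : modelPoint m n < 2) :
    |log (friableModel ρ m n) - log (ρ (n / m)) - n / m * xi (n / m) / (2 * m)| ≤
      9 * (log (n / m + 1) / m) := by
  have hm' : (1 : ℝ) ≤ m := mod_cast hm
  obtain ⟨lower, upper⟩ := h.log_friableModel_sub_log_mem_Icc hm hmn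
  have w_le := one_div_le_two_mul_log_div hm hmn
  have d_nonneg := div_sub_modelPoint_nonneg hm hmn
  have d_le := div_sub_modelPoint_le (n := n) hm
  have hu1 : (1 : ℝ) ≤ n / m := (one_le_div (by linarith)).2 (mod_cast hmn)
  have hu3 : (n / m : ℝ) ≤ 3 := by
    rw [div_le_iff₀ (by linarith)]
    nlinarith [modelPoint_mul m n]
  have ξ_nonneg := xi_nonneg (n / m)
  have ξ_le : xi (n / m) ≤ 3 := by
    linarith [monotone_xi hu3, xi_le_two_mul_log (by norm_num : (1 : ℝ) ≤ 3), log_three_lt_d9]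
  have r_le : logDecay ρ (n / m) ≤ 3 :=
    (h.logDecay_monotoneOn hu1 (by norm_num) hu3).trans h.logDecay_three_le
  have r_pos := h.logDecay_pos hu1
  have r_pos' := h.logDecay_pos (one_le_modelPoint hmn)
  have upper_le := calc (n / m - modelPoint m n) * logDecay ρ (n / m)
      ≤ n / m / (2 * m) * logDecay ρ (n / m) := by gcongr
    _ ≤ 3 / (2 * m) * 3 := by gcongr
    _ = 9 / 2 * (1 / m) := by ring
  have main_le := calc n / m * xi (n / m) / (2 * m)
      ≤ 3 * 3 / (2 * m) := by gcongr
    _ = 9 / 2 * (1 / m) := by ring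
  have main_nonneg : 0 ≤ n / m * xi (n / m) / (2 * m) := by positivity
  have lower_nonneg : 0 ≤ (n / m - modelPoint m n) * logDecay ρ (modelPoint m n) := by positivity
  rw [abs_le]
  constructor <;> linarith

theorem abs_log_friableModel_sub_le (h : IsDickman ρ) (hm : 1 ≤ m) (hmn : m ≤ n) :
    |log (friableModel ρ m n) - log (ρ (n / m)) - n / m * xi (n / m) / (2 * m)| ≤
      (9 + 3 * (n / m * (log (n / m + 1) / m))) * (log (n / m + 1) / m) := by
  have hB : 0 < log (n / m + 1) / m :=
    div_pos (by linarith [half_le_log_div_add_one hm hmn]) (mod_cast hm)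
  rcases le_or_gt 2 (modelPoint m n) with hU | hU
  · refine (h.abs_log_friableModel_sub_le_of_two_le hm hmn hU).trans ?_
    gcongr
    norm_num
  · refine (h.abs_log_friableModel_sub_le_of_lt_two hm hmn hU).trans ?_
    gcongr
    exact le_add_of_nonneg_right (by positivity)

theorem abs_permProb_div_sub_one_le (h : IsDickman ρ) (hm : 1 ≤ m) (hmn : m ≤ n)
    (hT : n / m * (log (n / m + 1) / m) ≤ T) :
    |permProb n m / (ρ (n / m) * exp (n / m * xi (n / m) / (2 * m))) - 1| ≤
      (8 * exp 6 + 11 + 11 * T) * exp ((9 + 3 * T) * T) * (log (n / m + 1) / m) := by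
  have model_error := h.abs_permProb_div_friableModel_sub_one_le hm hmn
  have log_error := h.abs_log_friableModel_sub_le hm hmn
  set E := log (friableModel ρ m n) - log (ρ (n / m)) - n / m * xi (n / m) / (2 * m) with hE
  have hB : 0 < log (n / m + 1) / m :=
    div_pos (by linarith [half_le_log_div_add_one hm hmn]) (mod_cast hm)
  set B := log (n / m + 1) / m
  have hBT : B ≤ T :=
    (le_mul_of_one_le_left hB.le ((one_le_div (mod_cast hm)).2 (mod_cast hmn))).trans hT
  have factor : permProb n m / (ρ (n / m) * exp (n / m * xi (n / m) / (2 * m))) =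
      permProb n m / friableModel ρ m n * exp E := by
    have hF := h.friableModel_pos m n
    rw [hE, exp_sub, exp_sub, exp_log hF, exp_log (h.pos (by positivity))]
    field_simp
  have hT0 : 0 ≤ T := hB.le.trans hBT
  replace model_error : |permProb n m / friableModel ρ m n - 1| ≤ (8 * exp 6 + 2 + 8 * T) * B :=
    model_error.trans (by gcongr)
  replace log_error : |E| ≤ (9 + 3 * T) * B := log_error.trans (by gcongr)
  have E_le : |E| ≤ (9 + 3 * T) * T := log_error.trans (by gcongr)
  rw [factor]
  calc |permProb n m / friableModel ρ m n * exp E - 1|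
      ≤ (|permProb n m / friableModel ρ m n - 1| + |E|) * exp |E| := abs_mul_exp_sub_one_le _ _
    _ ≤ ((8 * exp 6 + 2 + 8 * T) * B + (9 + 3 * T) * B) * exp ((9 + 3 * T) * T) := by gcongr
    _ = _ := by ring

end IsDickman

theorem div_mul_log_div_le_of_sqrt_le (hm : 1 ≤ m) (hn : 2 ≤ n)
    (hA : √(n * log n) ≤ A * m) : n / m * (log (n / m + 1) / m) ≤ 2 * A ^ 2 := by
  have hm' : (1 : ℝ) ≤ m := mod_cast hm
  have hn' : (2 : ℝ) ≤ n := mod_cast hn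
  have log_le : log (n / m + 1) ≤ 2 * log n := by
    rw [← Nat.cast_ofNat, ← log_pow]
    refine log_le_log (by positivity) ?_
    nlinarith [div_le_self n.cast_nonneg hm']
  calc n / m * (log (n / m + 1) / m) ≤ n / m * (2 * log n / m) := by gcongr
    _ = 2 * (n * log n) / m ^ 2 := by ring
    _ ≤ 2 * (A * m) ^ 2 / m ^ 2 := by
        gcongr
        exact (sqrt_le_iff.1 hA).2
    _ = 2 * A ^ 2 := by
        field_simp

end RelativeError

/-- For every `A > 0` there exists `C > 0` such that for all integers
`n ≥ m ≥ 1` with `√(n·log n) ≤ A·m`, writing `u = n/m`, one has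
`|p_{n,m}/(ρ(u)·exp(u·ξ(u)/(2m))) − 1| ≤ C·log(u+1)/m`. -/
theorem stmt1 :
    ∀ A : ℝ, 0 < A → ∃ C : ℝ, 0 < C ∧ ∀ n m : ℕ, 1 ≤ m → m ≤ n →
      Real.sqrt ((n : ℝ) * Real.log n) ≤ A * (m : ℝ) →
      ∀ ρ : ℝ → ℝ, IsDickman ρ → ∀ u : ℝ, u = (n : ℝ) / (m : ℝ) →
      |permProb n m / (ρ u * Real.exp (u * xi u / (2 * (m : ℝ)))) - 1| ≤
        C * Real.log (u + 1) / (m : ℝ) := by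
  intro A hA
  refine ⟨(8 * exp 6 + 11 + 11 * (2 * A ^ 2)) * exp ((9 + 3 * (2 * A ^ 2)) * (2 * A ^ 2)),
    by positivity, fun n m hm hmn hsqrt ρ h u hu ↦ ?_⟩
  subst hu
  rw [mul_div_assoc _ (log _)]
  rcases hmn.eq_or_lt with rfl | hlt
  · have hm0 : (m : ℝ) ≠ 0 := by positivity
    rw [div_self hm0, permProb_of_le le_rfl, h.eq_one zero_le_one le_rfl, xi_of_le_one le_rfl]
    simp only [mul_zero, zero_div, exp_zero, mul_one, div_one, sub_self, abs_zero]
    have : 0 ≤ log (1 + 1) := log_nonneg (by norm_num)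
    positivity
  · exact h.abs_permProb_div_sub_one_le hm hmn
      (div_mul_log_div_le_of_sqrt_le hm (by omega) hsqrt)
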